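/- arXiv:0711.3258 — 3 statements merged into one kernel-verified Lean document; each statement's English description precedes it below -/
import Mathlib

section
/- Let n ≥ 2, μ ∈ (0,1), U ⊆ ℝ^{n-1} open, and h : U → (real symmetric positive definite (n-1)×(n-1) matrices) smooth. Let m⁰ : (1,∞)×U → ℝ, m¹ : (1,∞)×U → ℝ^{n-1}, m² : (1,∞)×U → (symmetric (n-1)×(n-1) matrices) be smooth with, for every compact K ⊆ U, every k ∈ ℕ and multi-index α, |∂_r^k∂_θ^α m⁰(r,θ)| ≤ C r^{-1-μ-k}, |∂_r^k∂_θ^α m¹(r,θ)| ≤ C r^{-(1+μ)/2-k}, |∂_r^k∂_θ^α m²(r,θ)| ≤ C r^{-μ-k} on (1,∞)×K. Form the n×n block matrix G(r,θ) = [[1+m⁰(r,θ), r·(m¹(r,θ))ᵀ],[r·m¹(r,θ), r²(h(θ)+m²(r,θ))]]. Then for every compact K ⊆ U there exists R ≥ 1 such that G(r,θ) is invertible for (r,θ) ∈ (R,∞)×K, and its inverse has the block form G(r,θ)^{-1} = [[1+b⁰(r,θ), r^{-1}(b¹(r,θ))ᵀ],[r^{-1}b¹(r,θ), r^{-2}(h(θ)^{-1}+b²(r,θ))]]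 where b⁰, b¹, b² are smooth on (R,∞)×K and satisfy |∂_r^k∂_θ^α b⁰| ≤ C' r^{-1-μ-k}, |∂_r^k∂_θ^α b¹| ≤ C' r^{-(1+μ)/2-k}, |∂_r^k∂_θ^α b²| ≤ C' r^{-μ-k} there. -/
open Real Set Filter Topology

namespace Scattering

/-- The Euclidean norm of a vector in `Fin m → ℝ`. -/
noncomputable def eNorm {m : ℕ} (v : Fin m → ℝ) : ℝ := Real.sqrt (∑ j, v j ^ 2)

/-- Partial derivative in the radial variable of a function of `(r, θ)`. -/
noncomputable def pderivR {m : ℕ} (f : ℝ → (Fin m → ℝ) → ℝ) : ℝ → (Fin m → ℝ) → ℝ :=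
  fun r θ => deriv (fun s => f s θ) r

/-- Partial derivative in the `j`-th angular variable of a function of `(r, θ)`. -/
noncomputable def pderivTheta {m : ℕ} (j : Fin m) (f : ℝ → (Fin m → ℝ) → ℝ) :
    ℝ → (Fin m → ℝ) → ℝ :=
  fun r θ => fderiv ℝ (f r) θ (Pi.single j 1)

/-- Iterated angular derivatives `∂_θ^α` for a multi-index `α` (a list of directions). -/
noncomputable def thetaDerivs {m : ℕ} (α : List (Fin m)) (f : ℝ → (Fin m → ℝ) → ℝ) :
    ℝ → (Fin m → ℝ) → ℝ :=
  α.foldr pderivTheta f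

/-- `DecayOn f ν S K` : for all `k, α` there is `C > 0` with
`|∂_r^k ∂_θ^α f(r,θ)| ≤ C r^{-ν-k}` for `r ∈ (S,∞)`, `θ ∈ K`. -/
def DecayOn {m : ℕ} (f : ℝ → (Fin m → ℝ) → ℝ) (ν S : ℝ) (K : Set (Fin m → ℝ)) : Prop :=
  ∀ (k : ℕ) (α : List (Fin m)), ∃ C > 0, ∀ r ∈ Ioi S, ∀ θ ∈ K,
    |(pderivR (m := m))^[k] (thetaDerivs α f) r θ| ≤ C * r ^ (-ν - (k : ℝ))

/-- The classical kinetic energy function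
`p(r,θ,ρ,ω) = ρ² + r⁻²Σ h^{jk} ω_j ω_k + a₀ ρ² + r⁻¹ Σ a₁^j ρ ω_j + r⁻² Σ a₂^{jk} ω_j ω_k`. -/
noncomputable def energy {m : ℕ} (hM : (Fin m → ℝ) → Matrix (Fin m) (Fin m) ℝ)
    (a0 : ℝ → (Fin m → ℝ) → ℝ) (a1 : ℝ → (Fin m → ℝ) → Fin m → ℝ)
    (a2 : ℝ → (Fin m → ℝ) → Matrix (Fin m) (Fin m) ℝ) :
    ℝ → (Fin m → ℝ) → ℝ → (Fin m → ℝ) → ℝ :=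
  fun r θ ρ ω =>
    ρ ^ 2 + (∑ j, ∑ k, hM θ j k * ω j * ω k) / r ^ 2 + a0 r θ * ρ ^ 2
      + (∑ j, a1 r θ j * ρ * ω j) / r + (∑ j, ∑ k, a2 r θ j k * ω j * ω k) / r ^ 2

section PhaseDerivs

variable {m : ℕ} (p : ℝ → (Fin m → ℝ) → ℝ → (Fin m → ℝ) → ℝ)

/-- `∂p/∂r`. -/
noncomputable def pdR (r : ℝ) (θ : Fin m → ℝ) (ρ : ℝ) (ω : Fin m → ℝ) : ℝ :=
  deriv (fun s => p s θ ρ ω) r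

/-- `∂p/∂θ_j`. -/
noncomputable def pdTheta (j : Fin m) (r : ℝ) (θ : Fin m → ℝ) (ρ : ℝ) (ω : Fin m → ℝ) : ℝ :=
  fderiv ℝ (fun θ' => p r θ' ρ ω) θ (Pi.single j 1)

/-- `∂p/∂ρ`. -/
noncomputable def pdRho (r : ℝ) (θ : Fin m → ℝ) (ρ : ℝ) (ω : Fin m → ℝ) : ℝ :=
  deriv (fun s => p r θ s ω) ρ

/-- `∂p/∂ω_j`. -/
noncomputable def pdOmega (j : Fin m) (r : ℝ) (θ : Fin m → ℝ) (ρ : ℝ) (ω : Fin m → ℝ) : ℝ :=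
  fderiv ℝ (fun ω' => p r θ ρ ω') ω (Pi.single j 1)

/-- `(r,θ,ρ,ω)` solves the Hamiltonian system
`ṙ = ∂p/∂ρ, θ̇ = ∂p/∂ω, ρ̇ = -∂p/∂r, ω̇ = -∂p/∂θ` on the set `I` of times. -/
def IsHamSolOn (r : ℝ → ℝ) (θ : ℝ → Fin m → ℝ) (ρ : ℝ → ℝ) (ω : ℝ → Fin m → ℝ)
    (I : Set ℝ) : Prop :=
  ∀ t ∈ I,
    HasDerivAt r (pdRho p (r t) (θ t) (ρ t) (ω t)) t ∧
    (∀ j, HasDerivAt (fun s => θ s j) (pdOmega p j (r t) (θ t) (ρ t) (ω t)) t) ∧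
    HasDerivAt ρ (-pdR p (r t) (θ t) (ρ t) (ω t)) t ∧
    (∀ j, HasDerivAt (fun s => ω s j) (-pdTheta p j (r t) (θ t) (ρ t) (ω t)) t)

/-- The interaction-picture (time-dependent) Hamiltonian `K(t,R,θ,ρ,ω) = ρ² - p(R+2tρ,θ,ρ,ω)`. -/
noncomputable def Kint (t R : ℝ) (θ : Fin m → ℝ) (ρ : ℝ) (ω : Fin m → ℝ) : ℝ :=
  ρ ^ 2 - p (R + 2 * t * ρ) θ ρ ω

/-- `∂K/∂R`. -/
noncomputable def KdR (t R : ℝ) (θ : Fin m → ℝ) (ρ : ℝ) (ω : Fin m → ℝ) : ℝ :=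
  deriv (fun x => Kint p t x θ ρ ω) R

/-- `∂K/∂θ_j`. -/
noncomputable def KdTheta (j : Fin m) (t R : ℝ) (θ : Fin m → ℝ) (ρ : ℝ) (ω : Fin m → ℝ) : ℝ :=
  fderiv ℝ (fun θ' => Kint p t R θ' ρ ω) θ (Pi.single j 1)

/-- `∂K/∂ρ`. -/
noncomputable def KdRho (t R : ℝ) (θ : Fin m → ℝ) (ρ : ℝ) (ω : Fin m → ℝ) : ℝ :=
  deriv (fun x => Kint p t R θ x ω) ρ

/-- `∂K/∂ω_j`. -/
noncomputable def KdOmega (j : Fin m) (t R : ℝ) (θ : Fin m → ℝ) (ρ : ℝ) (ω : Fin m → ℝ) : ℝ :=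
  fderiv ℝ (fun ω' => Kint p t R θ ρ ω') ω (Pi.single j 1)

end PhaseDerivs

/-- The phase space `ℝ × ℝ^m × ℝ × ℝ^m` with coordinates `(R, θ, ρ, ω)`. -/
abbrev Phase (m : ℕ) : Type := ℝ × (Fin m → ℝ) × ℝ × (Fin m → ℝ)

/-- A curve `f = (R,θ,ρ,ω)` solves the interaction-picture Hamiltonian system
`Ṙ = ∂K/∂ρ, θ̇ = ∂K/∂ω, ρ̇ = -∂K/∂R, ω̇ = -∂K/∂θ` on the set `I` of times. -/
def IsIntSolOn {m : ℕ} (p : ℝ → (Fin m → ℝ) → ℝ → (Fin m → ℝ) → ℝ)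
    (f : ℝ → Phase m) (I : Set ℝ) : Prop :=
  ∀ t ∈ I,
    HasDerivAt (fun s => (f s).1) (KdRho p t (f t).1 (f t).2.1 (f t).2.2.1 (f t).2.2.2) t ∧
    (∀ j, HasDerivAt (fun s => (f s).2.1 j)
      (KdOmega p j t (f t).1 (f t).2.1 (f t).2.2.1 (f t).2.2.2) t) ∧
    HasDerivAt (fun s => (f s).2.2.1)
      (-(KdR p t (f t).1 (f t).2.1 (f t).2.2.1 (f t).2.2.2)) t ∧
    (∀ j, HasDerivAt (fun s => (f s).2.2.2 j)
      (-(KdTheta p j t (f t).1 (f t).2.1 (f t).2.2.1 (f t).2.2.2)) t)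

/-- The data of a scattering metric of short-range type on the end `(1,∞) × U`:
the boundary metric `h` (smooth, symmetric, positive definite) and the coefficients
`a₀, a₁, a₂` of the kinetic energy, smooth on `(1,∞) × U` with the short-range decay
`|∂_r^k ∂_θ^α a₀| ≤ C r^{-1-μ-k}`, `|∂_r^k ∂_θ^α a₁| ≤ C r^{-μ-k}`,
`|∂_r^k ∂_θ^α a₂| ≤ C r^{-μ-k}` on `(1,∞) × K` for every compact `K ⊆ U`. -/
structure Coeffs (m : ℕ) (μ : ℝ) (U : Set (Fin m → ℝ)) where
  hM : (Fin m → ℝ) → Matrix (Fin m) (Fin m) ℝ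
  a0 : ℝ → (Fin m → ℝ) → ℝ
  a1 : ℝ → (Fin m → ℝ) → Fin m → ℝ
  a2 : ℝ → (Fin m → ℝ) → Matrix (Fin m) (Fin m) ℝ
  hM_smooth : ∀ j k, ContDiffOn ℝ (⊤ : ℕ∞) (fun θ => hM θ j k) U
  hM_symm : ∀ θ ∈ U, (hM θ).IsSymm
  hM_posdef : ∀ θ ∈ U, (hM θ).PosDef
  a0_smooth : ContDiffOn ℝ (⊤ : ℕ∞) (fun z : ℝ × (Fin m → ℝ) => a0 z.1 z.2) (Ioi (1:ℝ) ×ˢ U)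
  a1_smooth : ∀ j, ContDiffOn ℝ (⊤ : ℕ∞) (fun z : ℝ × (Fin m → ℝ) => a1 z.1 z.2 j) (Ioi (1:ℝ) ×ˢ U)
  a2_smooth : ∀ j k, ContDiffOn ℝ (⊤ : ℕ∞) (fun z : ℝ × (Fin m → ℝ) => a2 z.1 z.2 j k) (Ioi (1:ℝ) ×ˢ U)
  a2_symm : ∀ r θ j k, a2 r θ j k = a2 r θ k j
  a0_decay : ∀ K : Set (Fin m → ℝ), IsCompact K → K ⊆ U → DecayOn a0 (1 + μ) 1 K
  a1_decay : ∀ K : Set (Fin m → ℝ), IsCompact K → K ⊆ U →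
    ∀ j, DecayOn (fun r θ => a1 r θ j) μ 1 K
  a2_decay : ∀ K : Set (Fin m → ℝ), IsCompact K → K ⊆ U →
    ∀ j k, DecayOn (fun r θ => a2 r θ j k) μ 1 K

/-- The kinetic energy function associated to the data `c`. -/
noncomputable def Coeffs.p {m : ℕ} {μ : ℝ} {U : Set (Fin m → ℝ)} (c : Coeffs m μ U) :
    ℝ → (Fin m → ℝ) → ℝ → (Fin m → ℝ) → ℝ :=
  energy c.hM c.a0 c.a1 c.a2


/-- The `n × n` block matrix
`G(r,θ) = [[1 + m⁰, r(m¹)ᵀ], [r m¹, r²(h + m²)]]` of a scattering metric. -/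
noncomputable def metricBlock {m : ℕ} (hM : (Fin m → ℝ) → Matrix (Fin m) (Fin m) ℝ)
    (m0 : ℝ → (Fin m → ℝ) → ℝ) (m1 : ℝ → (Fin m → ℝ) → Fin m → ℝ)
    (m2 : ℝ → (Fin m → ℝ) → Matrix (Fin m) (Fin m) ℝ) (r : ℝ) (θ : Fin m → ℝ) :
    Matrix (Fin 1 ⊕ Fin m) (Fin 1 ⊕ Fin m) ℝ :=
  Matrix.fromBlocks (Matrix.of fun _ _ => 1 + m0 r θ)
    (Matrix.of fun _ j => r * m1 r θ j)
    (Matrix.of fun i _ => r * m1 r θ i)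
    (Matrix.of fun i j => r ^ 2 * (hM θ i j + m2 r θ i j))

/-- The block form `[[1 + b⁰, r⁻¹(b¹)ᵀ], [r⁻¹ b¹, r⁻²(h⁻¹ + b²)]]` of the inverse. -/
noncomputable def inverseBlock {m : ℕ} (hM : (Fin m → ℝ) → Matrix (Fin m) (Fin m) ℝ)
    (b0 : ℝ → (Fin m → ℝ) → ℝ) (b1 : ℝ → (Fin m → ℝ) → Fin m → ℝ)
    (b2 : ℝ → (Fin m → ℝ) → Matrix (Fin m) (Fin m) ℝ) (r : ℝ) (θ : Fin m → ℝ) :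
    Matrix (Fin 1 ⊕ Fin m) (Fin 1 ⊕ Fin m) ℝ :=
  Matrix.fromBlocks (Matrix.of fun _ _ => 1 + b0 r θ)
    (Matrix.of fun _ j => r⁻¹ * b1 r θ j)
    (Matrix.of fun i _ => r⁻¹ * b1 r θ i)
    (Matrix.of fun i j => (r ^ 2)⁻¹ * ((hM θ)⁻¹ i j + b2 r θ i j))


section Helpers

variable {m : ℕ}

/-- Coordinate directions: `none` radial, `some j` angular. -/
noncomputable def dirv (i : Option (Fin m)) : ℝ × (Fin m → ℝ) :=
  match i with
  | none => (1, 0)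
  | some j => (0, Pi.single j 1)

/-- weight of a direction -/
def wt (i : Option (Fin m)) : ℝ :=
  match i with
  | none => 1
  | some _ => 0

/-- directional derivative -/
noncomputable def DD (i : Option (Fin m)) (F : ℝ × (Fin m → ℝ) → ℝ) : ℝ × (Fin m → ℝ) → ℝ :=
  fun z => fderiv ℝ F z (dirv i)

/-- symbol bounds up to order N -/
def SymN (W : Set (ℝ × (Fin m → ℝ))) : ℕ → (ℝ × (Fin m → ℝ) → ℝ) → ℝ → Prop
  | 0, F, ν => ∃ C, ∀ z ∈ W, |F z| ≤ C * z.1 ^ (-ν)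
  | N + 1, F, ν => (∃ C, ∀ z ∈ W, |F z| ≤ C * z.1 ^ (-ν)) ∧
      ∀ i : Option (Fin m), SymN W N (DD i F) (ν + wt i)

/-- symbol class -/
def Symb (W : Set (ℝ × (Fin m → ℝ))) (F : ℝ × (Fin m → ℝ) → ℝ) (ν : ℝ) : Prop :=
  ContDiffOn ℝ (⊤ : ℕ∞) F W ∧ ∀ N, SymN W N F ν

variable {W : Set (ℝ × (Fin m → ℝ))} {F G : ℝ × (Fin m → ℝ) → ℝ} {ν κ : ℝ}

lemma DD_smooth (hW : IsOpen W) (hF : ContDiffOn ℝ (⊤ : ℕ∞) F W) (i : Option (Fin m)) :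
    ContDiffOn ℝ (⊤ : ℕ∞) (DD i F) W := by
  have h := hF.fderiv_of_isOpen hW (m := ((⊤ : ℕ∞) : WithTop ℕ∞)) (by simp)
  exact h.clm_apply contDiffOn_const

lemma sm_diff (hW : IsOpen W) (hF : ContDiffOn ℝ (⊤ : ℕ∞) F W) {z} (hz : z ∈ W) :
    DifferentiableAt ℝ F z :=
  ((hF.contDiffAt (hW.mem_nhds hz)).differentiableAt (by simp))

lemma DD_congr (hW : IsOpen W) (h : EqOn F G W) (i : Option (Fin m)) :
    EqOn (DD i F) (DD i G) W := by
  intro z hz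
  have : F =ᶠ[𝓝 z] G := by
    filter_upwards [hW.mem_nhds hz] with y hy using h hy
  simp only [DD, this.fderiv_eq]

lemma SymN.bd {N} (h : SymN W N F ν) : ∃ C, ∀ z ∈ W, |F z| ≤ C * z.1 ^ (-ν) := by
  cases N with
  | zero => exact h
  | succ N => exact h.1

lemma SymN.congr (hW : IsOpen W) : ∀ {N : ℕ} {F G : ℝ × (Fin m → ℝ) → ℝ} {ν : ℝ},
    EqOn F G W → SymN W N F ν → SymN W N G ν := by
  intro N
  induction N with
  | zero =>
    rintro F G ν h ⟨C, hC⟩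
    exact ⟨C, fun z hz => by rw [← h hz]; exact hC z hz⟩
  | succ N ih =>
    rintro F G ν h ⟨⟨C, hC⟩, h2⟩
    exact ⟨⟨C, fun z hz => by rw [← h hz]; exact hC z hz⟩,
      fun i => ih (DD_congr hW h i) (h2 i)⟩

lemma SymN.pred : ∀ {N : ℕ} {F : ℝ × (Fin m → ℝ) → ℝ} {ν : ℝ},
    SymN W (N + 1) F ν → SymN W N F ν := by
  intro N
  induction N with
  | zero => intro F ν h; exact h.1
  | succ N ih => intro F ν h; exact ⟨h.1, fun i => ih (h.2 i)⟩

lemma SymN.mono_set {W' : Set (ℝ × (Fin m → ℝ))} (hs : W' ⊆ W) :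
    ∀ {N : ℕ} {F : ℝ × (Fin m → ℝ) → ℝ} {ν : ℝ}, SymN W N F ν → SymN W' N F ν := by
  intro N
  induction N with
  | zero => rintro F ν ⟨C, h⟩; exact ⟨C, fun z hz => h z (hs hz)⟩
  | succ N ih =>
    rintro F ν ⟨⟨C, h⟩, h2⟩
    exact ⟨⟨C, fun z hz => h z (hs hz)⟩, fun i => ih (h2 i)⟩

lemma bd_mono (h1 : ∀ z ∈ W, 1 < z.1) (hk : κ ≤ ν)
    (h : ∃ C, ∀ z ∈ W, |F z| ≤ C * z.1 ^ (-ν)) : ∃ C, ∀ z ∈ W, |F z| ≤ C * z.1 ^ (-κ) := by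
  obtain ⟨C, hC⟩ := h
  refine ⟨|C|, fun z hz => (hC z hz).trans ?_⟩
  have := h1 z hz
  exact mul_le_mul (le_abs_self C) (Real.rpow_le_rpow_of_exponent_le this.le (by linarith))
    (Real.rpow_nonneg (by linarith) _) (abs_nonneg _)

lemma SymN.mono (h1 : ∀ z ∈ W, 1 < z.1) :
    ∀ {N : ℕ} {F : ℝ × (Fin m → ℝ) → ℝ} {ν κ : ℝ}, κ ≤ ν → SymN W N F ν → SymN W N F κ := by
  intro N
  induction N with
  | zero => intro F ν κ hk h; exact bd_mono h1 hk h
  | succ N ih =>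
    intro F ν κ hk h
    exact ⟨bd_mono h1 hk h.1, fun i => ih (by linarith) (h.2 i)⟩

lemma SymN.zero : ∀ {N : ℕ} {ν : ℝ}, SymN W N (fun _ => 0) ν := by
  intro N
  induction N with
  | zero => intro ν; exact ⟨0, by simp⟩
  | succ N ih =>
    intro ν
    refine ⟨⟨0, by simp⟩, fun i => ?_⟩
    have : DD i (fun _ : ℝ × (Fin m → ℝ) => (0:ℝ)) = fun _ => 0 := by
      funext z; simp [DD]
    rw [this]; exact ih

lemma bd_add (h : ∃ C, ∀ z ∈ W, |F z| ≤ C * z.1 ^ (-ν))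
    (h' : ∃ C, ∀ z ∈ W, |G z| ≤ C * z.1 ^ (-ν)) :
    ∃ C, ∀ z ∈ W, |F z + G z| ≤ C * z.1 ^ (-ν) := by
  obtain ⟨C, hC⟩ := h
  obtain ⟨C', hC'⟩ := h'
  refine ⟨C + C', fun z hz => ?_⟩
  have := abs_add_le (F z) (G z)
  have := hC z hz
  have := hC' z hz
  linarith

lemma bd_mul (h1 : ∀ z ∈ W, 1 < z.1) (h : ∃ C, ∀ z ∈ W, |F z| ≤ C * z.1 ^ (-ν))
    (h' : ∃ C, ∀ z ∈ W, |G z| ≤ C * z.1 ^ (-κ)) :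
    ∃ C, ∀ z ∈ W, |F z * G z| ≤ C * z.1 ^ (-(ν + κ)) := by
  obtain ⟨C, hC⟩ := h
  obtain ⟨C', hC'⟩ := h'
  refine ⟨C * C', fun z hz => ?_⟩
  have e : z.1 ^ (-(ν + κ)) = z.1 ^ (-ν) * z.1 ^ (-κ) := by
    rw [← Real.rpow_add (by linarith [h1 z hz])]; ring_nf
  rw [abs_mul, e]
  calc |F z| * |G z| ≤ (C * z.1 ^ (-ν)) * (C' * z.1 ^ (-κ)) :=
        mul_le_mul (hC z hz) (hC' z hz) (abs_nonneg _) ((abs_nonneg _).trans (hC z hz))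
    _ = _ := by ring

lemma SymN.add (hW : IsOpen W) : ∀ {N : ℕ} {F G : ℝ × (Fin m → ℝ) → ℝ} {ν : ℝ},
    ContDiffOn ℝ (⊤ : ℕ∞) F W → ContDiffOn ℝ (⊤ : ℕ∞) G W →
    SymN W N F ν → SymN W N G ν → SymN W N (fun z => F z + G z) ν := by
  intro N
  induction N with
  | zero => intro F G ν _ _ h h'; exact bd_add h h'
  | succ N ih =>
    intro F G ν hF hG h h'
    refine ⟨bd_add h.1 h'.1, fun i => ?_⟩
    refine SymN.congr hW (F := fun z => DD i F z + DD i G z) ?_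
      (ih (DD_smooth hW hF i) (DD_smooth hW hG i) (h.2 i) (h'.2 i))
    intro z hz
    simp only [DD]
    rw [fderiv_fun_add (sm_diff hW hF hz) (sm_diff hW hG hz)]
    simp

lemma SymN.mul (hW : IsOpen W) (h1 : ∀ z ∈ W, 1 < z.1) :
    ∀ {N : ℕ} {F G : ℝ × (Fin m → ℝ) → ℝ} {ν κ : ℝ},
    ContDiffOn ℝ (⊤ : ℕ∞) F W → ContDiffOn ℝ (⊤ : ℕ∞) G W →
    SymN W N F ν → SymN W N G κ → SymN W N (fun z => F z * G z) (ν + κ) := by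
  intro N
  induction N with
  | zero => intro F G ν κ _ _ h h'; exact bd_mul h1 h h'
  | succ N ih =>
    intro F G ν κ hF hG h h'
    refine ⟨bd_mul h1 h.1 h'.1, fun i => ?_⟩
    have a := ih hF (DD_smooth hW hG i) h.pred (h'.2 i)
    have b := ih (DD_smooth hW hF i) hG (h.2 i) h'.pred
    rw [show ν + (κ + wt i) = ν + κ + wt i by ring] at a
    rw [show ν + wt i + κ = ν + κ + wt i by ring] at b
    refine SymN.congr hW ?_ (SymN.add hW (hF.mul (DD_smooth hW hG i))
      ((DD_smooth hW hF i).mul hG) a b)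
    intro z hz
    simp only [DD]
    rw [fderiv_fun_mul (sm_diff hW hF hz) (sm_diff hW hG hz)]
    simp [mul_comm]

lemma SymN.inv (hW : IsOpen W) (h1 : ∀ z ∈ W, 1 < z.1) {c : ℝ} (hc : 0 < c)
    (hF : ContDiffOn ℝ (⊤ : ℕ∞) F W) (hc' : ∀ z ∈ W, c ≤ F z) :
    ∀ {N : ℕ}, SymN W N F 0 → SymN W N (fun z => (F z)⁻¹) 0 := by
  have hne : ∀ z ∈ W, F z ≠ 0 := fun z hz => (hc.trans_le (hc' z hz)).ne'
  have hb : ∃ C, ∀ z ∈ W, |(F z)⁻¹| ≤ C * z.1 ^ (-(0:ℝ)) := by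
    refine ⟨c⁻¹, fun z hz => ?_⟩
    have := hc' z hz
    rw [abs_inv, abs_of_pos (hc.trans_le this)]
    simpa using inv_anti₀ hc this
  have hi : ContDiffOn ℝ (⊤ : ℕ∞) (fun z => (F z)⁻¹) W := hF.inv hne
  intro N
  induction N with
  | zero => intro _; exact hb
  | succ N ih =>
    intro h
    refine ⟨hb, fun i => ?_⟩
    have hm1 : SymN W N (fun _ : ℝ × (Fin m → ℝ) => (-1:ℝ)) 0 := by
      cases N with
      | zero => exact ⟨1, by simp⟩
      | succ N =>
        refine ⟨⟨1, by simp⟩, fun i => ?_⟩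
        have : DD i (fun _ : ℝ × (Fin m → ℝ) => (-1:ℝ)) = fun _ => 0 := by
          funext z; simp [DD]
        rw [this]; exact SymN.zero
    have g := ih h.pred
    have a := SymN.mul hW h1 contDiffOn_const (DD_smooth hW hF i) hm1 (h.2 i)
    have b := SymN.mul hW h1 hi hi g g
    have e := SymN.mul hW h1 (contDiffOn_const.mul (DD_smooth hW hF i)) (hi.mul hi) a b
    rw [show (0:ℝ) + (0 + wt i) + (0 + 0) = 0 + wt i by ring] at e
    refine SymN.congr hW ?_ e
    intro z hz
    simp only [DD]
    have hd := (sm_diff hW hF hz).hasFDerivAt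
    have := (hasDerivAt_inv (hne z hz)).comp_hasFDerivAt z hd
    have h2 := this.fderiv
    have h3 : (fun z => (F z)⁻¹) = (fun y => y⁻¹) ∘ F := rfl
    rw [h3, h2]
    have := hne z hz
    simp
    field_simp

lemma Symb.congr (hW : IsOpen W) (h : EqOn F G W) (hF : Symb W F ν) : Symb W G ν :=
  ⟨hF.1.congr (fun _ hz => (h hz).symm), fun N => (hF.2 N).congr hW h⟩

lemma Symb.mono_set {W' : Set (ℝ × (Fin m → ℝ))} (hs : W' ⊆ W) (h : Symb W F ν) :
    Symb W' F ν := ⟨h.1.mono hs, fun N => (h.2 N).mono_set hs⟩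

lemma Symb.mono (h1 : ∀ z ∈ W, 1 < z.1) (hk : κ ≤ ν) (h : Symb W F ν) : Symb W F κ :=
  ⟨h.1, fun N => (h.2 N).mono h1 hk⟩

lemma Symb.zero : Symb W (fun _ => 0) ν := ⟨contDiffOn_const, fun _ => SymN.zero⟩

lemma Symb.const (c : ℝ) : Symb W (fun _ => c) 0 := by
  refine ⟨contDiffOn_const, fun N => ?_⟩
  cases N with
  | zero => exact ⟨|c|, by simp⟩
  | succ N =>
    refine ⟨⟨|c|, by simp⟩, fun i => ?_⟩
    have : DD i (fun _ : ℝ × (Fin m → ℝ) => c) = fun _ => 0 := by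
      funext z; simp [DD]
    rw [this]; exact SymN.zero

lemma Symb.add (hW : IsOpen W) (h : Symb W F ν) (h' : Symb W G ν) :
    Symb W (fun z => F z + G z) ν :=
  ⟨h.1.add h'.1, fun N => SymN.add hW h.1 h'.1 (h.2 N) (h'.2 N)⟩

lemma Symb.mul (hW : IsOpen W) (h1 : ∀ z ∈ W, 1 < z.1) (h : Symb W F ν) (h' : Symb W G κ) :
    Symb W (fun z => F z * G z) (ν + κ) :=
  ⟨h.1.mul h'.1, fun N => SymN.mul hW h1 h.1 h'.1 (h.2 N) (h'.2 N)⟩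

lemma Symb.mul' (hW : IsOpen W) (h1 : ∀ z ∈ W, 1 < z.1) {τ : ℝ} (h : Symb W F ν)
    (h' : Symb W G κ) (e : ν + κ = τ) :
    Symb W (fun z => F z * G z) τ := e ▸ h.mul hW h1 h'

lemma Symb.neg (hW : IsOpen W) (h1 : ∀ z ∈ W, 1 < z.1) (h : Symb W F ν) :
    Symb W (fun z => - F z) ν := by
  have := (Symb.const (W := W) (-1)).mul' hW h1 h (zero_add ν)
  simpa using this

lemma Symb.sub (hW : IsOpen W) (h1 : ∀ z ∈ W, 1 < z.1) (h : Symb W F ν) (h' : Symb W G ν) :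
    Symb W (fun z => F z - G z) ν := by
  simpa [sub_eq_add_neg] using h.add hW (h'.neg hW h1)

lemma Symb.inv (hW : IsOpen W) (h1 : ∀ z ∈ W, 1 < z.1) {c : ℝ} (hc : 0 < c)
    (hc' : ∀ z ∈ W, c ≤ F z) (h : Symb W F 0) : Symb W (fun z => (F z)⁻¹) 0 :=
  ⟨h.1.inv (fun z hz => (hc.trans_le (hc' z hz)).ne'),
    fun N => SymN.inv hW h1 hc h.1 hc' (h.2 N)⟩

lemma Symb.sum (hW : IsOpen W) {ι : Type*} (s : Finset ι)
    {f : ι → ℝ × (Fin m → ℝ) → ℝ} (h : ∀ i, Symb W (f i) ν) :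
    Symb W (fun z => ∑ i ∈ s, f i z) ν := by
  classical
  induction s using Finset.induction_on with
  | empty => simpa using Symb.zero
  | insert a s ha ih => simpa [Finset.sum_insert ha] using (h a).add hW ih

lemma Symb.prod (hW : IsOpen W) (h1 : ∀ z ∈ W, 1 < z.1) {ι : Type*} (s : Finset ι)
    {f : ι → ℝ × (Fin m → ℝ) → ℝ} (h : ∀ i, Symb W (f i) 0) :
    Symb W (fun z => ∏ i ∈ s, f i z) 0 := by
  classical
  induction s using Finset.induction_on with
  | empty => simpa using Symb.const 1
  | insert a s ha ih => simpa [Finset.prod_insert ha] using (h a).mul' hW h1 ih (add_zero 0)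

lemma Symb.prod_sub (hW : IsOpen W) (h1 : ∀ z ∈ W, 1 < z.1) {ι : Type*} (s : Finset ι)
    {f g : ι → ℝ × (Fin m → ℝ) → ℝ} (hf : ∀ i, Symb W (f i) 0) (hg : ∀ i, Symb W (g i) 0)
    (h : ∀ i, Symb W (fun z => f i z - g i z) ν) :
    Symb W (fun z => ∏ i ∈ s, f i z - ∏ i ∈ s, g i z) ν := by
  classical
  induction s using Finset.induction_on with
  | empty => simpa using Symb.zero
  | insert a s ha ih =>
    have a1 := (hf a).mul' hW h1 ih (zero_add ν)
    have a2 := (h a).mul' hW h1 (Symb.prod hW h1 s hg) (add_zero ν)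
    refine Symb.congr hW ?_ (a1.add hW a2)
    intro z _
    simp only [Finset.prod_insert ha]
    ring

lemma Symb.det (hW : IsOpen W) (h1 : ∀ z ∈ W, 1 < z.1) {ι : Type*} [Fintype ι] [DecidableEq ι]
    {A : ℝ × (Fin m → ℝ) → Matrix ι ι ℝ} (h : ∀ i j, Symb W (fun z => A z i j) 0) :
    Symb W (fun z => (A z).det) 0 := by
  simp only [Matrix.det_apply']
  exact Symb.sum hW _ fun σ => (Symb.const _).mul' hW h1
    (Symb.prod hW h1 _ fun i => h _ _) (add_zero 0)

lemma Symb.det_sub (hW : IsOpen W) (h1 : ∀ z ∈ W, 1 < z.1) {ι : Type*} [Fintype ι]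
    [DecidableEq ι] {A B : ℝ × (Fin m → ℝ) → Matrix ι ι ℝ}
    (hA : ∀ i j, Symb W (fun z => A z i j) 0) (hB : ∀ i j, Symb W (fun z => B z i j) 0)
    (h : ∀ i j, Symb W (fun z => A z i j - B z i j) ν) :
    Symb W (fun z => (A z).det - (B z).det) ν := by
  simp only [Matrix.det_apply', ← Finset.sum_sub_distrib, ← mul_sub]
  exact Symb.sum hW _ fun σ => (Symb.const _).mul' hW h1
    (Symb.prod_sub hW h1 _ (fun i => hA _ _) (fun i => hB _ _) (fun i => h _ _)) (zero_add ν)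

lemma Symb.matInv (hW : IsOpen W) (h1 : ∀ z ∈ W, 1 < z.1) {ι : Type*} [Fintype ι]
    [DecidableEq ι] {A : ℝ × (Fin m → ℝ) → Matrix ι ι ℝ}
    (hA : ∀ i j, Symb W (fun z => A z i j) 0) {c : ℝ} (hc : 0 < c)
    (hc' : ∀ z ∈ W, c ≤ (A z).det) (i j : ι) : Symb W (fun z => (A z)⁻¹ i j) 0 := by
  have hd := (Symb.det hW h1 hA).inv hW h1 hc hc'
  have ha : Symb W (fun z => (A z).adjugate i j) 0 := by
    simp only [Matrix.adjugate_apply]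
    refine Symb.det hW h1 fun k l => ?_
    by_cases hk : k = j
    · subst hk
      simpa [Matrix.updateRow_self] using Symb.const _
    · simpa [Matrix.updateRow_ne hk] using hA k l
  refine Symb.congr hW ?_ (hd.mul' hW h1 ha (add_zero 0))
  intro z _
  simp [Matrix.inv_def]

lemma Symb.tendsto {ε : ℝ} (hε : 0 < ε) (hν : 0 < ν)
    (h : Symb W F ν) : ∃ R ≥ (1:ℝ), ∀ z ∈ W, R < z.1 → |F z| ≤ ε := by
  obtain ⟨C, hC⟩ := (h.2 0).bd
  have ht : Tendsto (fun r : ℝ => C * r ^ (-ν)) atTop (𝓝 0) := by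
    simpa using (tendsto_rpow_neg_atTop hν).const_mul C
  obtain ⟨R, hR⟩ := eventually_atTop.1 (ht.eventually (gt_mem_nhds hε))
  refine ⟨max R 1, le_max_right _ _, fun z hz hr => (hC z hz).trans (hR z.1 ?_).le⟩
  exact (le_max_left _ _).trans hr.le

lemma symN_theta {U K' : Set (Fin m → ℝ)} (hU : IsOpen U) (hK' : IsCompact K')
    (hKU : K' ⊆ U) (hWK : ∀ z ∈ W, z.2 ∈ K') (hW : IsOpen W) (N : ℕ) :
    ∀ φ : (Fin m → ℝ) → ℝ, ContDiffOn ℝ (⊤ : ℕ∞) φ U → SymN W N (fun z => φ z.2) 0 := by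
  have bd : ∀ φ : (Fin m → ℝ) → ℝ, ContDiffOn ℝ (⊤ : ℕ∞) φ U →
      ∃ C, ∀ z ∈ W, |φ z.2| ≤ C * z.1 ^ (-(0:ℝ)) := by
    intro φ hφ
    obtain ⟨C, hC⟩ := hK'.exists_bound_of_continuousOn (hφ.continuousOn.mono hKU)
    exact ⟨C, fun z hz => by simpa using hC z.2 (hWK z hz)⟩
  induction N with
  | zero => exact bd
  | succ N ih =>
    intro φ hφ
    refine ⟨bd φ hφ, fun i => ?_⟩
    have key : ∀ z ∈ W, DD i (fun z : ℝ × (Fin m → ℝ) => φ z.2) z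
        = fderiv ℝ φ z.2 (dirv i).2 := by
      intro z hz
      have hd : DifferentiableAt ℝ φ z.2 :=
        (hφ.contDiffAt (hU.mem_nhds (hKU (hWK z hz)))).differentiableAt (by simp)
      have := hd.hasFDerivAt.comp z hasFDerivAt_snd
      have h2 : fderiv ℝ (fun z : ℝ × (Fin m → ℝ) => φ z.2) z = _ := this.fderiv
      simp [DD, h2]
    cases i with
    | none =>
      refine SymN.congr hW (F := fun _ => 0) ?_ SymN.zero
      intro z hz
      simp [key z hz, dirv]
    | some j =>
      have hs : ContDiffOn ℝ (⊤ : ℕ∞) (fun θ => fderiv ℝ φ θ (dirv (some j)).2) U :=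
        (hφ.fderiv_of_isOpen hU (m := ((⊤ : ℕ∞) : WithTop ℕ∞)) (by simp)).clm_apply
          contDiffOn_const
      have := ih _ hs
      rw [show (0:ℝ) + wt (some j) = 0 by simp [wt]]
      exact SymN.congr hW (fun z hz => (key z hz).symm) this

lemma symb_theta {U K' : Set (Fin m → ℝ)} (hU : IsOpen U) (hK' : IsCompact K')
    (hKU : K' ⊆ U) (hWK : ∀ z ∈ W, z.2 ∈ K') (hW : IsOpen W)
    {φ : (Fin m → ℝ) → ℝ} (hφ : ContDiffOn ℝ (⊤ : ℕ∞) φ U) : Symb W (fun z => φ z.2) 0 :=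
  ⟨hφ.comp contDiffOn_snd (fun z hz => hKU (hWK z hz)),
    fun N => symN_theta hU hK' hKU hWK hW N φ hφ⟩

/-- iterated angular derivatives, uncurried -/
noncomputable def DL (α : List (Fin m)) (F : ℝ × (Fin m → ℝ) → ℝ) : ℝ × (Fin m → ℝ) → ℝ :=
  α.foldr (fun j => DD (some j)) F

lemma DL_smooth (hW : IsOpen W) (hF : ContDiffOn ℝ (⊤ : ℕ∞) F W) (α : List (Fin m)) :
    ContDiffOn ℝ (⊤ : ℕ∞) (DL α F) W := by
  induction α with
  | nil => exact hF
  | cons j α ih => exact DD_smooth hW ih (some j)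

lemma DL_congr (hW : IsOpen W) (h : EqOn F G W) (α : List (Fin m)) :
    EqOn (DL α F) (DL α G) W := by
  induction α with
  | nil => exact h
  | cons j α ih => exact DD_congr hW ih (some j)

lemma DI_congr (hW : IsOpen W) (k : ℕ) :
    ∀ {F G : ℝ × (Fin m → ℝ) → ℝ}, EqOn F G W → EqOn ((DD none)^[k] F) ((DD none)^[k] G) W := by
  induction k with
  | zero => intro F G h; exact h
  | succ k ih => intro F G h; exact ih (DD_congr hW h none)

lemma pR_eq (hW : IsOpen W) {f : ℝ → (Fin m → ℝ) → ℝ}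
    (hF : ContDiffOn ℝ (⊤ : ℕ∞) F W) (h : EqOn (fun z => f z.1 z.2) F W) :
    EqOn (fun z => pderivR f z.1 z.2) (DD none F) W := by
  rintro ⟨r, θ⟩ hz
  have hd := (sm_diff hW hF hz).hasFDerivAt
  have hc : HasDerivAt (fun s : ℝ => (s, θ)) ((1:ℝ), (0 : Fin m → ℝ)) r :=
    (hasDerivAt_id r).prodMk (hasDerivAt_const r θ)
  have h1 := HasFDerivAt.comp_hasDerivAt (f := fun s : ℝ => (s, θ)) r hd hc
  have hev : (fun s => f s θ) =ᶠ[𝓝 r] (F ∘ fun s : ℝ => (s, θ)) := by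
    filter_upwards [hc.continuousAt.preimage_mem_nhds (hW.mem_nhds hz)] with s hs using h hs
  simp only [pderivR, DD, dirv]
  rw [hev.deriv_eq]
  exact h1.deriv

lemma pT_eq (hW : IsOpen W) {f : ℝ → (Fin m → ℝ) → ℝ} (j : Fin m)
    (hF : ContDiffOn ℝ (⊤ : ℕ∞) F W) (h : EqOn (fun z => f z.1 z.2) F W) :
    EqOn (fun z => pderivTheta j f z.1 z.2) (DD (some j) F) W := by
  rintro ⟨r, θ⟩ hz
  have hd := (sm_diff hW hF hz).hasFDerivAt
  have hc := hasFDerivAt_prodMk_right (𝕜 := ℝ) r θ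
  have h1 := HasFDerivAt.comp (f := fun s : Fin m → ℝ => (r, s)) θ hd hc
  have hev : f r =ᶠ[𝓝 θ] (F ∘ fun s : Fin m → ℝ => (r, s)) := by
    filter_upwards [hc.continuousAt.preimage_mem_nhds (hW.mem_nhds hz)] with s hs using h hs
  simp only [pderivTheta, DD, dirv]
  rw [hev.fderiv_eq, h1.fderiv]
  simp

lemma conv_eq (hW : IsOpen W) {f : ℝ → (Fin m → ℝ) → ℝ}
    (hF : ContDiffOn ℝ (⊤ : ℕ∞) (fun z : ℝ × (Fin m → ℝ) => f z.1 z.2) W)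
    (k : ℕ) (α : List (Fin m)) :
    EqOn (fun z => (pderivR (m := m))^[k] (thetaDerivs α f) z.1 z.2)
      ((DD none)^[k] (DL α (fun z => f z.1 z.2))) W := by
  have a : EqOn (fun z => thetaDerivs α f z.1 z.2) (DL α (fun z => f z.1 z.2)) W := by
    induction α with
    | nil => exact fun z _ => rfl
    | cons j α ih => exact pT_eq hW j (DL_smooth hW hF α) ih
  have gen : ∀ (k : ℕ) (g : ℝ → (Fin m → ℝ) → ℝ) (G : ℝ × (Fin m → ℝ) → ℝ),
      ContDiffOn ℝ (⊤ : ℕ∞) G W → EqOn (fun z => g z.1 z.2) G W →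
      EqOn (fun z => (pderivR (m := m))^[k] g z.1 z.2) ((DD none)^[k] G) W := by
    intro k
    induction k with
    | zero => intro g G _ h; exact h
    | succ k ih =>
      intro g G hG h
      exact ih _ _ (DD_smooth hW hG none) (pR_eq hW hG h)
  exact gen k _ _ (DL_smooth hW hF α) a

lemma DD_comm (hW : IsOpen W) (hF : ContDiffOn ℝ (⊤ : ℕ∞) F W) (i j : Option (Fin m)) :
    EqOn (DD i (DD j F)) (DD j (DD i F)) W := by
  intro z hz
  have hc := hF.contDiffAt (hW.mem_nhds hz)
  have hs : IsSymmSndFDerivAt ℝ F z := hc.isSymmSndFDerivAt (by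
    simp only [minSmoothness_of_isRCLikeNormedField]
    exact WithTop.coe_le_coe.2 le_top)
  have hd : DifferentiableAt ℝ (fderiv ℝ F) z :=
    ((hF.fderiv_of_isOpen hW (m := ((⊤ : ℕ∞) : WithTop ℕ∞)) (by simp)).contDiffAt
      (hW.mem_nhds hz)).differentiableAt (by simp)
  have e : ∀ i j : Option (Fin m), DD i (DD j F) z = fderiv ℝ (fderiv ℝ F) z (dirv i) (dirv j) := by
    intro i j
    have := (hd.hasFDerivAt.clm_apply (hasFDerivAt_const (dirv j) z)).fderiv
    have h2 : fderiv ℝ (DD j F) z = _ := this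
    show fderiv ℝ (DD j F) z (dirv i) = _
    rw [h2]
    simp
  rw [e, e]
  exact hs _ _

lemma DL_comm (hW : IsOpen W) (hF : ContDiffOn ℝ (⊤ : ℕ∞) F W) (α : List (Fin m)) :
    EqOn (DL α (DD none F)) (DD none (DL α F)) W := by
  induction α with
  | nil => exact fun z _ => rfl
  | cons j α ih =>
    exact (DD_congr hW ih (some j)).trans (DD_comm hW (DL_smooth hW hF α) (some j) none)

lemma symb_of_bounds (hW : IsOpen W) (N : ℕ) :
    ∀ (F : ℝ × (Fin m → ℝ) → ℝ) (ν : ℝ), ContDiffOn ℝ (⊤ : ℕ∞) F W →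
    (∀ (k : ℕ) (α : List (Fin m)), ∃ C, ∀ z ∈ W,
      |(DD none)^[k] (DL α F) z| ≤ C * z.1 ^ (-ν - (k:ℝ))) → SymN W N F ν := by
  induction N with
  | zero =>
    intro F ν _ h
    show ∃ C, ∀ z ∈ W, |F z| ≤ C * z.1 ^ (-ν)
    simpa [DL] using h 0 []
  | succ N ih =>
    intro F ν hF h
    refine ⟨by simpa [DL] using h 0 [], fun i => ih _ _ (DD_smooth hW hF i) fun k α => ?_⟩
    cases i with
    | none =>
      obtain ⟨C, hC⟩ := h (k + 1) α
      refine ⟨C, fun z hz => ?_⟩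
      rw [DI_congr hW k (DL_comm hW hF α) hz]
      have := hC z hz
      rw [Function.iterate_succ_apply] at this
      convert this using 3
      simp [wt]; ring
    | some j =>
      obtain ⟨C, hC⟩ := h k (α ++ [j])
      refine ⟨C, fun z hz => ?_⟩
      have := hC z hz
      simpa [DL, wt] using this

lemma symb_of_decay {R : ℝ} {V : Set (Fin m → ℝ)} (hV : IsOpen V)
    {f : ℝ → (Fin m → ℝ) → ℝ}
    (hF : ContDiffOn ℝ (⊤ : ℕ∞) (fun z : ℝ × (Fin m → ℝ) => f z.1 z.2) (Ioi R ×ˢ V))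
    (h : DecayOn f ν R V) : Symb (Ioi R ×ˢ V) (fun z => f z.1 z.2) ν := by
  have hW : IsOpen (Ioi R ×ˢ V) := isOpen_Ioi.prod hV
  refine ⟨hF, fun N => symb_of_bounds hW N _ _ hF fun k α => ?_⟩
  obtain ⟨C, _, hC⟩ := h k α
  refine ⟨C, fun z hz => ?_⟩
  rw [← conv_eq hW hF k α hz]
  exact hC z.1 hz.1 z.2 hz.2

lemma decay_of_symb {R : ℝ} (hR : 1 ≤ R) {V : Set (Fin m → ℝ)} (hV : IsOpen V)
    {f : ℝ → (Fin m → ℝ) → ℝ}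
    (h : Symb (Ioi R ×ˢ V) (fun z => f z.1 z.2) ν) : DecayOn f ν R V := by
  have hW : IsOpen (Ioi R ×ˢ V) := isOpen_Ioi.prod hV
  intro k α
  have hD : ∀ (F : ℝ × (Fin m → ℝ) → ℝ) (ν : ℝ) (i : Option (Fin m)), Symb (Ioi R ×ˢ V) F ν →
      Symb (Ioi R ×ˢ V) (DD i F) (ν + wt i) := fun F ν i h =>
    ⟨DD_smooth hW h.1 i, fun N => (h.2 (N + 1)).2 i⟩
  have a : Symb (Ioi R ×ˢ V) (DL α (fun z => f z.1 z.2)) ν := by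
    induction α with
    | nil => exact h
    | cons j α ih => 
      have := hD _ _ (some j) ih
      rw [show ν + wt (some j) = ν by simp [wt]] at this
      exact this
  have gen : ∀ (k : ℕ) (G : ℝ × (Fin m → ℝ) → ℝ) (ν : ℝ), Symb (Ioi R ×ˢ V) G ν →
      Symb (Ioi R ×ˢ V) ((DD none)^[k] G) (ν + k) := by
    intro k
    induction k with
    | zero => intro G ν h; simpa using h
    | succ k ih =>
      intro G ν h
      have := ih _ _ (hD _ _ none h)
      rw [show ν + ((k + 1 : ℕ) : ℝ) = ν + wt (none : Option (Fin m)) + k by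
        simp [wt]; ring]
      exact this
  obtain ⟨C, hC⟩ := ((gen k _ _ a).2 0).bd
  refine ⟨max C 1, by positivity, fun r hr θ hθ => ?_⟩
  have e := conv_eq hW h.1 k α (x := (r, θ)) ⟨hr, hθ⟩
  simp only at e
  rw [e]
  refine (hC (r, θ) ⟨hr, hθ⟩).trans ?_
  have hr' : R < r := hr
  rw [show -(ν + (k:ℝ)) = -ν - k by ring]
  exact mul_le_mul_of_nonneg_right (le_max_left _ _) (Real.rpow_nonneg (by linarith) _)

lemma block_inv {n : ℕ} (H M A' Hi B2 : Matrix (Fin n) (Fin n) ℝ) (v x b1 : Fin n → ℝ)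
    (a b0 s r : ℝ) (hr : r ≠ 0) (hs : s ≠ 0) (hAA : (H + M) * A' = 1)
    (hx : x = A'.mulVec v) (hsym : Matrix.transpose A' = A') (hsdef : s = 1 + a - v ⬝ᵥ x)
    (hb0 : 1 + b0 = s⁻¹) (hb1 : ∀ j, b1 j = - (x j * s⁻¹))
    (hb2 : ∀ i j, Hi i j + B2 i j = A' i j + x i * x j * s⁻¹) :
    (Matrix.fromBlocks (Matrix.of fun _ _ => 1 + a)
      (Matrix.of fun _ j => r * v j) (Matrix.of fun i _ => r * v i)
      (Matrix.of fun i j => r ^ 2 * (H i j + M i j)) :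
        Matrix (Fin 1 ⊕ Fin n) (Fin 1 ⊕ Fin n) ℝ) *
    Matrix.fromBlocks (Matrix.of fun _ _ => 1 + b0)
      (Matrix.of fun _ j => r⁻¹ * b1 j) (Matrix.of fun i _ => r⁻¹ * b1 i)
      (Matrix.of fun i j => (r ^ 2)⁻¹ * (Hi i j + B2 i j)) = 1 := by
  have hAx : ∀ i, ∑ k, (H i k + M i k) * x k = v i := by
    intro i
    have : (H + M).mulVec x = v := by
      rw [hx, Matrix.mulVec_mulVec, hAA, Matrix.one_mulVec]
    have := congrFun this i
    simpa [Matrix.mulVec, dotProduct] using this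
  have hxA : ∀ j, ∑ k, v k * A' k j = x j := by
    intro j
    have := congrFun hx j
    rw [this]
    simp only [Matrix.mulVec, dotProduct]
    refine Finset.sum_congr rfl fun k _ => ?_
    rw [mul_comm, show A' k j = A' j k from congrFun (congrFun hsym j) k]
  have hA : ∀ i j, ∑ k, (H i k + M i k) * A' k j = (1 : Matrix (Fin n) (Fin n) ℝ) i j := by
    intro i j
    rw [← hAA]; simp [Matrix.mul_apply]
  have hvx : ∑ k, v k * x k = 1 + a - s := by
    rw [hsdef]; simp [dotProduct]
  rw [Matrix.fromBlocks_multiply, ← Matrix.fromBlocks_one]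
  congr 1
  · ext i j
    have e : ∀ k, r * v k * (r⁻¹ * -(x k * s⁻¹)) = - s⁻¹ * (v k * x k) := fun k => by
      field_simp
    simp only [Matrix.add_apply, Matrix.mul_apply, Matrix.of_apply, hb0, hb1, e,
      ← Finset.mul_sum, hvx]
    rw [Subsingleton.elim i j]
    simp
    field_simp
    ring
  · ext i j
    have e : ∀ k, r * v k * ((r ^ 2)⁻¹ * (A' k j + x k * x j * s⁻¹)) =
        r⁻¹ * (v k * A' k j) + r⁻¹ * x j * s⁻¹ * (v k * x k) := fun k => by
      field_simp
    simp only [Matrix.add_apply, Matrix.mul_apply, Matrix.of_apply, hb2, hb1, e,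
      ← Finset.mul_sum, hvx, Finset.sum_add_distrib, hxA]
    simp
    field_simp
    ring
  · ext i j
    have e : ∀ k, r ^ 2 * (H i k + M i k) * (r⁻¹ * -(x k * s⁻¹)) =
        - (r * s⁻¹) * ((H i k + M i k) * x k) := fun k => by
      field_simp
    simp only [Matrix.add_apply, Matrix.mul_apply, Matrix.of_apply, hb0, hb1, e,
      ← Finset.mul_sum, hAx]
    simp
    ring
  · ext i j
    have e : ∀ k, r ^ 2 * (H i k + M i k) * ((r ^ 2)⁻¹ * (A' k j + x k * x j * s⁻¹)) =
        (H i k + M i k) * A' k j + x j * s⁻¹ * ((H i k + M i k) * x k) := fun k => by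
      field_simp
    simp only [Matrix.add_apply, Matrix.mul_apply, Matrix.of_apply, hb2, hb1, e,
      ← Finset.mul_sum, hAx, Finset.sum_add_distrib, hA]
    simp
    field_simp
    ring

end Helpers

/-- The metric block matrix `G(r,θ)` of a short-range scattering metric
is, for `r` large (locally uniformly in `θ`), invertible, and its inverse has the block
form `[[1 + b⁰, r⁻¹(b¹)ᵀ], [r⁻¹b¹, r⁻²(h⁻¹ + b²)]]` with `b⁰, b¹, b²` smooth and
satisfying the same decay estimates as `m⁰, m¹, m²`. -/
theorem statement_0 {m : ℕ} (hm : 1 ≤ m) {μ : ℝ} (hμ : μ ∈ Ioo (0:ℝ) 1)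
    {U : Set (Fin m → ℝ)} (hU : IsOpen U)
    (hM : (Fin m → ℝ) → Matrix (Fin m) (Fin m) ℝ)
    (hM_smooth : ∀ j k, ContDiffOn ℝ (⊤ : ℕ∞) (fun θ => hM θ j k) U)
    (hM_symm : ∀ θ ∈ U, (hM θ).IsSymm)
    (hM_posdef : ∀ θ ∈ U, (hM θ).PosDef)
    (m0 : ℝ → (Fin m → ℝ) → ℝ) (m1 : ℝ → (Fin m → ℝ) → Fin m → ℝ)
    (m2 : ℝ → (Fin m → ℝ) → Matrix (Fin m) (Fin m) ℝ)
    (hm0s : ContDiffOn ℝ (⊤ : ℕ∞) (fun z : ℝ × (Fin m → ℝ) => m0 z.1 z.2) (Ioi (1:ℝ) ×ˢ U))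
    (hm1s : ∀ j, ContDiffOn ℝ (⊤ : ℕ∞) (fun z : ℝ × (Fin m → ℝ) => m1 z.1 z.2 j) (Ioi (1:ℝ) ×ˢ U))
    (hm2s : ∀ j k, ContDiffOn ℝ (⊤ : ℕ∞) (fun z : ℝ × (Fin m → ℝ) => m2 z.1 z.2 j k)
      (Ioi (1:ℝ) ×ˢ U))
    (hm2symm : ∀ r θ j k, m2 r θ j k = m2 r θ k j)
    (hm0d : ∀ K : Set (Fin m → ℝ), IsCompact K → K ⊆ U → DecayOn m0 (1 + μ) 1 K)
    (hm1d : ∀ K : Set (Fin m → ℝ), IsCompact K → K ⊆ U →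
      ∀ j, DecayOn (fun r θ => m1 r θ j) ((1 + μ)/2) 1 K)
    (hm2d : ∀ K : Set (Fin m → ℝ), IsCompact K → K ⊆ U →
      ∀ j k, DecayOn (fun r θ => m2 r θ j k) μ 1 K)
    (K : Set (Fin m → ℝ)) (hK : IsCompact K) (hKU : K ⊆ U) :
    ∃ R ≥ (1:ℝ), ∃ (b0 : ℝ → (Fin m → ℝ) → ℝ) (b1 : ℝ → (Fin m → ℝ) → Fin m → ℝ)
      (b2 : ℝ → (Fin m → ℝ) → Matrix (Fin m) (Fin m) ℝ),
      ContDiffOn ℝ (⊤ : ℕ∞) (fun z : ℝ × (Fin m → ℝ) => b0 z.1 z.2) (Ioi R ×ˢ K) ∧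
      (∀ j, ContDiffOn ℝ (⊤ : ℕ∞) (fun z : ℝ × (Fin m → ℝ) => b1 z.1 z.2 j) (Ioi R ×ˢ K)) ∧
      (∀ j k, ContDiffOn ℝ (⊤ : ℕ∞) (fun z : ℝ × (Fin m → ℝ) => b2 z.1 z.2 j k) (Ioi R ×ˢ K)) ∧
      DecayOn b0 (1 + μ) R K ∧
      (∀ j, DecayOn (fun r θ => b1 r θ j) ((1 + μ)/2) R K) ∧
      (∀ j k, DecayOn (fun r θ => b2 r θ j k) μ R K) ∧
      ∀ r ∈ Ioi R, ∀ θ ∈ K,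
        IsUnit (metricBlock hM m0 m1 m2 r θ) ∧
        (metricBlock hM m0 m1 m2 r θ)⁻¹ = inverseBlock hM b0 b1 b2 r θ := by
  obtain ⟨hμ0, hμ1⟩ := hμ
  obtain ⟨K', hK', hKV, hK'U⟩ := exists_compact_between hK hU hKU
  set V := interior K' with hVdef
  have hV : IsOpen V := isOpen_interior
  have hVK' : V ⊆ K' := interior_subset
  have hVU : V ⊆ U := hVK'.trans hK'U
  have hWo : ∀ R : ℝ, IsOpen (Ioi R ×ˢ V) := fun R => isOpen_Ioi.prod hV
  have hW1 : ∀ R : ℝ, 1 ≤ R → ∀ z ∈ Ioi R ×ˢ V, 1 < z.1 :=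
    fun R hR z hz => lt_of_le_of_lt hR hz.1
  have hdm : ∀ (f : ℝ → (Fin m → ℝ) → ℝ) (ν : ℝ), DecayOn f ν 1 K' → DecayOn f ν 1 V := by
    intro f ν h k α
    obtain ⟨C, h0, hC⟩ := h k α
    exact ⟨C, h0, fun r hr θ hθ => hC r hr θ (hVK' hθ)⟩
  have hsub : Ioi (1:ℝ) ×ˢ V ⊆ Ioi (1:ℝ) ×ˢ U := prod_mono le_rfl hVU
  have S0 := symb_of_decay hV (hm0s.mono hsub) (hdm _ _ (hm0d K' hK' hK'U))
  have S1 := fun j => symb_of_decay hV ((hm1s j).mono hsub) (hdm _ _ (hm1d K' hK' hK'U j))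
  have S2 := fun j k => symb_of_decay hV ((hm2s j k).mono hsub) (hdm _ _ (hm2d K' hK' hK'U j k))
  have Sh : ∀ i j, Symb (Ioi (1:ℝ) ×ˢ V) (fun z => hM z.2 i j) 0 := fun i j =>
    symb_theta hU hK' hK'U (fun z hz => hVK' hz.2) (hWo 1) (hM_smooth i j)
  -- determinant of h
  obtain ⟨c, hc, hcK⟩ : ∃ c, 0 < c ∧ ∀ θ ∈ K', c ≤ (hM θ).det := by
    refine hK'.exists_forall_le' (f := fun θ => (hM θ).det) ?_
      (fun θ hθ => (hM_posdef θ (hK'U hθ)).det_pos)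
    simp only [Matrix.det_apply']
    refine continuousOn_finsetSum _ fun σ _ => continuousOn_const.mul ?_
    exact continuousOn_finsetProd _ fun i _ => (hM_smooth _ _).continuousOn.mono hK'U
  -- A = h + m2
  have h11 := hW1 1 le_rfl
  have SA : ∀ i j, Symb (Ioi (1:ℝ) ×ˢ V) (fun z => (hM z.2 + m2 z.1 z.2) i j) 0 := fun i j =>
    (Sh i j).add (hWo 1) ((S2 i j).mono h11 hμ0.le)
  have Sdet := Symb.det_sub (ν := μ) (hWo 1) h11 SA Sh (fun i j => by
    simpa using S2 i j)
  obtain ⟨R1, hR1, hdet⟩ := Sdet.tendsto (half_pos hc) hμ0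
  have hcA : ∀ z ∈ Ioi R1 ×ˢ V, c / 2 ≤ (hM z.2 + m2 z.1 z.2).det := by
    intro z hz
    have h1 := hdet z ⟨lt_of_le_of_lt hR1 hz.1, hz.2⟩ hz.1
    have h2 := hcK z.2 (hVK' hz.2)
    have := (abs_le.1 h1).1
    linarith
  have hs1 : Ioi R1 ×ˢ V ⊆ Ioi (1:ℝ) ×ˢ V := prod_mono (Ioi_subset_Ioi hR1) le_rfl
  have h1R1 := hW1 R1 hR1
  have SAi := Symb.matInv (hWo R1) h1R1 (fun i j => (SA i j).mono_set hs1) (half_pos hc) hcA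
  have Shi := Symb.matInv (A := fun z => hM z.2) (hWo R1) h1R1 (fun i j => (Sh i j).mono_set hs1) hc
    (fun z hz => hcK z.2 (hVK' hz.2))
  let X : ℝ × (Fin m → ℝ) → Fin m → ℝ := fun z =>
    ((hM z.2 + m2 z.1 z.2)⁻¹).mulVec (m1 z.1 z.2)
  have SX : ∀ i, Symb (Ioi R1 ×ˢ V) (fun z => X z i) ((1 + μ) / 2) := fun i => by
    simp only [X, Matrix.mulVec, dotProduct]
    exact Symb.sum (hWo R1) Finset.univ fun j => (SAi i j).mul' (hWo R1) h1R1 ((S1 j).mono_set hs1) (zero_add _)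
  let Q : ℝ × (Fin m → ℝ) → ℝ := fun z => m1 z.1 z.2 ⬝ᵥ X z
  have SQ : Symb (Ioi R1 ×ˢ V) Q (1 + μ) :=
    Symb.sum (hWo R1) _ fun j => ((S1 j).mono_set hs1).mul' (hWo R1) h1R1 (SX j) (by ring)
  have Sd : Symb (Ioi R1 ×ˢ V) (fun z => Q z - m0 z.1 z.2) (1 + μ) :=
    SQ.sub (hWo R1) h1R1 (S0.mono_set hs1)
  obtain ⟨R2, hR2, hQ⟩ := Sd.tendsto (half_pos one_pos) (by linarith)
  let R := max R1 R2
  have hR : 1 ≤ R := hR1.trans (le_max_left _ _)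
  have hs2 : Ioi R ×ˢ V ⊆ Ioi R1 ×ˢ V := prod_mono (Ioi_subset_Ioi (le_max_left _ _)) le_rfl
  have h1R := hW1 R hR
  let s : ℝ × (Fin m → ℝ) → ℝ := fun z => 1 + m0 z.1 z.2 - Q z
  have hsb : ∀ z ∈ Ioi R ×ˢ V, (1/2 : ℝ) ≤ s z := by
    intro z hz
    have := (abs_le.1 (hQ z (hs2 hz) (lt_of_le_of_lt (le_max_right _ _) hz.1))).2
    simp only [s]
    linarith
  have Ss : Symb (Ioi R ×ˢ V) s 0 := by
    refine Symb.congr (hWo R) ?_ ((Symb.const 1).sub (hWo R) h1R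
      ((Sd.mono_set hs2).mono h1R (by linarith : (0:ℝ) ≤ 1 + μ)))
    intro z _
    simp only [s]; ring
  have Ssi := Ss.inv (hWo R) h1R (half_pos one_pos) hsb
  have B0 : Symb (Ioi R ×ˢ V) (fun z => (Q z - m0 z.1 z.2) * (s z)⁻¹) (1 + μ) :=
    (Sd.mono_set hs2).mul' (hWo R) h1R Ssi (add_zero _)
  have B1 : ∀ j, Symb (Ioi R ×ˢ V) (fun z => -(X z j * (s z)⁻¹)) ((1 + μ) / 2) := fun j =>
    Symb.neg (hWo R) h1R (((SX j).mono_set hs2).mul' (hWo R) h1R Ssi (add_zero _))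
  have hhu : ∀ z ∈ Ioi R ×ˢ V, IsUnit (hM z.2).det := fun z hz =>
    (hc.trans_le (hcK z.2 (hVK' hz.2))).ne'.isUnit
  have hAu : ∀ z ∈ Ioi R ×ˢ V, IsUnit (hM z.2 + m2 z.1 z.2).det := fun z hz =>
    ((half_pos hc).trans_le (hcA z (hs2 hz))).ne'.isUnit
  have Bd : ∀ i j, Symb (Ioi R ×ˢ V)
      (fun z => (hM z.2 + m2 z.1 z.2)⁻¹ i j - (hM z.2)⁻¹ i j) μ := by
    intro i j
    have t : Symb (Ioi R ×ˢ V) (fun z => -(∑ l, (∑ k, (hM z.2 + m2 z.1 z.2)⁻¹ i k *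
        m2 z.1 z.2 k l) * (hM z.2)⁻¹ l j)) μ :=
      Symb.neg (hWo R) h1R (Symb.sum (hWo R) _ fun l => Symb.mul' (hWo R) h1R
        (Symb.sum (hWo R) _ fun k => Symb.mul' (hWo R) h1R ((SAi i k).mono_set hs2)
          ((S2 k l).mono_set (hs2.trans hs1)) (zero_add μ)) ((Shi l j).mono_set hs2) (add_zero μ))
    refine Symb.congr (hWo R) ?_ t
    intro z hz
    have e : (hM z.2 + m2 z.1 z.2)⁻¹ - (hM z.2)⁻¹ =
        -((hM z.2 + m2 z.1 z.2)⁻¹ * m2 z.1 z.2 * (hM z.2)⁻¹) := by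
      have e1 : m2 z.1 z.2 = (hM z.2 + m2 z.1 z.2) - hM z.2 := by simp
      conv_rhs => rw [show (hM z.2 + m2 z.1 z.2)⁻¹ * m2 z.1 z.2 =
        (hM z.2 + m2 z.1 z.2)⁻¹ * ((hM z.2 + m2 z.1 z.2) - hM z.2) by rw [← e1]]
      rw [Matrix.mul_sub, Matrix.nonsing_inv_mul _ (hAu z hz), Matrix.sub_mul, Matrix.one_mul,
        Matrix.mul_assoc, Matrix.mul_nonsing_inv _ (hhu z hz), Matrix.mul_one, neg_sub]
    have := congrFun (congrFun e i) j
    simp only [Matrix.sub_apply, Matrix.neg_apply, Matrix.mul_apply] at this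
    exact this.symm
  have B2 : ∀ i j, Symb (Ioi R ×ˢ V) (fun z => ((hM z.2 + m2 z.1 z.2)⁻¹ i j - (hM z.2)⁻¹ i j)
      + X z i * X z j * (s z)⁻¹) μ := fun i j =>
    (Bd i j).add (hWo R) (Symb.mono (ν := 1 + μ) h1R (by linarith)
      (Symb.mul' (hWo R) h1R (Symb.mul' (hWo R) h1R ((SX i).mono_set hs2) ((SX j).mono_set hs2)
        (by ring : (1 + μ) / 2 + (1 + μ) / 2 = 1 + μ)) Ssi (add_zero _)))
  have hdm' : ∀ (f : ℝ → (Fin m → ℝ) → ℝ) (ν : ℝ), DecayOn f ν R V → DecayOn f ν R K := by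
    intro f ν h k α
    obtain ⟨C, h0, hC⟩ := h k α
    exact ⟨C, h0, fun r hr θ hθ => hC r hr θ (hKV hθ)⟩
  have hsK : Ioi R ×ˢ K ⊆ Ioi R ×ˢ V := prod_mono le_rfl hKV
  refine ⟨R, hR, fun r θ => (Q (r, θ) - m0 r θ) * (s (r, θ))⁻¹,
    fun r θ j => -(X (r, θ) j * (s (r, θ))⁻¹),
    fun r θ => Matrix.of fun i j => ((hM θ + m2 r θ)⁻¹ i j - (hM θ)⁻¹ i j)
      + X (r, θ) i * X (r, θ) j * (s (r, θ))⁻¹,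
    B0.1.mono hsK, fun j => (B1 j).1.mono hsK, fun i j => (B2 i j).1.mono hsK,
    hdm' _ _ (decay_of_symb hR hV B0), fun j => hdm' _ _ (decay_of_symb hR hV (B1 j)),
    fun i j => hdm' _ _ (decay_of_symb hR hV (B2 i j)), ?_⟩
  intro r hr θ hθ
  have hz : (r, θ) ∈ Ioi R ×ˢ V := ⟨hr, hKV hθ⟩
  have hspos : s (r, θ) ≠ 0 := by
    have := hsb _ hz
    intro h0
    rw [h0] at this
    norm_num at this
  have hr0 : r ≠ 0 := by
    have : 1 < r := h1R _ hz
    linarith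
  have hAsym : Matrix.transpose ((hM θ + m2 r θ)⁻¹) = (hM θ + m2 r θ)⁻¹ := by
    rw [Matrix.transpose_nonsing_inv, Matrix.transpose_add, (hM_symm θ (hKU hθ)).eq]
    congr 2
    ext i j
    exact hm2symm r θ j i
  have key := block_inv (hM θ) (m2 r θ) (hM θ + m2 r θ)⁻¹ (hM θ)⁻¹
    (Matrix.of fun i j => ((hM θ + m2 r θ)⁻¹ i j - (hM θ)⁻¹ i j)
      + X (r, θ) i * X (r, θ) j * (s (r, θ))⁻¹) (m1 r θ) (X (r, θ))
    (fun j => -(X (r, θ) j * (s (r, θ))⁻¹)) (m0 r θ) ((Q (r, θ) - m0 r θ) * (s (r, θ))⁻¹)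
    (s (r, θ)) r hr0 hspos (Matrix.mul_nonsing_inv _ (hAu _ hz)) rfl hAsym rfl
    (by
      have : Q (r, θ) - m0 r θ = 1 - s (r, θ) := by simp only [s]; ring
      rw [this]; field_simp; ring) (fun _ => rfl)
    (fun i j => by simp only [Matrix.of_apply]; ring)
  exact ⟨(Matrix.isUnit_iff_isUnit_det _).2 (Matrix.isUnit_det_of_right_inverse key),
    Matrix.inv_eq_right_inv key⟩

end Scattering
end

section
/- For every compact K ⊆ U and every C₀ > 0 there exist R ≥ 1 and C > 0 such that: if (r(t),θ(t),ρ(t),ω(t)) is a solution of the Hamiltonian system with energy p₀, then at every time t at which r(t) ≥ R, θ(t) ∈ K, |ρ(t)| ≤ C₀ and |ω(t)| ≤ C₀·r(t), one has |(d²/dt²)(r(t)²) − 8p₀| ≤ C·r(t)^{-μ}. -/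
open Real Set Filter Topology

namespace Scattering

lemma diff_slices {m : ℕ} {f : ℝ → (Fin m → ℝ) → ℝ} {r : ℝ} {θ : Fin m → ℝ}
    (hf : DifferentiableAt ℝ (fun z : ℝ × (Fin m → ℝ) => f z.1 z.2) (r, θ)) :
    HasDerivAt (fun s => f s θ) (pderivR f r θ) r ∧
    DifferentiableAt ℝ (f r) θ := by
  constructor
  · have h : DifferentiableAt ℝ (fun s => f s θ) r :=
      DifferentiableAt.comp (f := fun s : ℝ => (s, θ)) r hf (by fun_prop)
    exact h.hasDerivAt
  · exact DifferentiableAt.comp (f := fun y : Fin m → ℝ => (r, y)) θ hf (by fun_prop)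

lemma chain_rule {m : ℕ} {f : ℝ → (Fin m → ℝ) → ℝ} {r : ℝ → ℝ} {θ : ℝ → Fin m → ℝ} {t : ℝ}
    {vr : ℝ} {vθ : Fin m → ℝ}
    (hf : DifferentiableAt ℝ (fun z : ℝ × (Fin m → ℝ) => f z.1 z.2) (r t, θ t))
    (hr : HasDerivAt r vr t) (hθ : ∀ j, HasDerivAt (fun s => θ s j) (vθ j) t) :
    HasDerivAt (fun s => f (r s) (θ s))
      (pderivR f (r t) (θ t) * vr + ∑ j, pderivTheta j f (r t) (θ t) * vθ j) t := by
  have hθ' : HasDerivAt θ vθ t := hasDerivAt_pi.2 hθ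
  have hF := hf.hasFDerivAt
  set L := fderiv ℝ (fun z : ℝ × (Fin m → ℝ) => f z.1 z.2) (r t, θ t) with hL
  have h1 := HasFDerivAt.comp_hasDerivAt (f := fun s => (r s, θ s)) t hF (hr.prodMk hθ')
  have e1 : pderivR f (r t) (θ t) = L (1, 0) := by
    have := HasFDerivAt.comp_hasDerivAt (f := fun s : ℝ => (s, θ t)) (r t) hF
      ((hasDerivAt_id (r t)).prodMk (hasDerivAt_const _ _))
    exact this.deriv
  have e2 : ∀ j, pderivTheta j f (r t) (θ t) = L (0, Pi.single j 1) := by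
    intro j
    have := HasFDerivAt.comp (f := fun y : Fin m → ℝ => (r t, y)) (θ t) hF
      ((hasFDerivAt_const (r t) (θ t)).prodMk (hasFDerivAt_id (θ t)))
    have h2 : fderiv ℝ (f (r t)) (θ t) = _ := this.fderiv
    unfold pderivTheta
    rw [h2]
    simp
  have e3 : L (vr, vθ) = pderivR f (r t) (θ t) * vr
      + ∑ j, pderivTheta j f (r t) (θ t) * vθ j := by
    have : ((vr, vθ) : ℝ × (Fin m → ℝ)) = vr • (1, 0) + ∑ j, vθ j • (0, Pi.single j 1) := by
      ext i
      · simp [Prod.fst_sum]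
      · simp [Prod.snd_sum, Pi.single_apply]
    rw [this, map_add, map_sum]
    simp only [map_smul, smul_eq_mul, e1, e2, mul_comm]
  rw [← e3]
  exact h1

lemma pdRho_energy {m : ℕ} (hM : (Fin m → ℝ) → Matrix (Fin m) (Fin m) ℝ)
    (a0 : ℝ → (Fin m → ℝ) → ℝ) (a1 : ℝ → (Fin m → ℝ) → Fin m → ℝ)
    (a2 : ℝ → (Fin m → ℝ) → Matrix (Fin m) (Fin m) ℝ) (r : ℝ) (θ : Fin m → ℝ) (ρ : ℝ)
    (ω : Fin m → ℝ) :
    pdRho (energy hM a0 a1 a2) r θ ρ ω = 2 * ρ * (1 + a0 r θ) + ∑ j, a1 r θ j * (ω j / r) := by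
  have h : HasDerivAt (fun s => energy hM a0 a1 a2 r θ s ω)
      (2 * ρ + a0 r θ * (2 * ρ) + (∑ j, a1 r θ j * 1 * ω j) / r) ρ := by
    unfold energy
    have hsq : HasDerivAt (fun s : ℝ => s ^ 2) (2 * ρ) ρ := by
      simpa using hasDerivAt_pow 2 ρ
    have hs : HasDerivAt (fun s : ℝ => ∑ j, a1 r θ j * s * ω j) (∑ j, a1 r θ j * 1 * ω j) ρ :=
      HasDerivAt.fun_sum fun j _ => ((hasDerivAt_id ρ).const_mul _).mul_const _
    exact (((hsq.add_const _).add (hsq.const_mul _)).add (hs.div_const r)).add_const _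
  unfold pdRho
  rw [h.deriv, Finset.sum_div]
  simp only [mul_one, mul_div_assoc]
  ring

lemma pdR_energy {m : ℕ} (hM : (Fin m → ℝ) → Matrix (Fin m) (Fin m) ℝ)
    (a0 : ℝ → (Fin m → ℝ) → ℝ) (a1 : ℝ → (Fin m → ℝ) → Fin m → ℝ)
    (a2 : ℝ → (Fin m → ℝ) → Matrix (Fin m) (Fin m) ℝ) (r : ℝ) (hr : r ≠ 0)
    (θ : Fin m → ℝ) (ρ : ℝ) (η : Fin m → ℝ) (A0 : ℝ) (A1 : Fin m → ℝ) (A2 : Fin m → Fin m → ℝ)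
    (h0 : HasDerivAt (fun s => a0 s θ) A0 r)
    (h1 : ∀ j, HasDerivAt (fun s => a1 s θ j) (A1 j) r)
    (h2 : ∀ j k, HasDerivAt (fun s => a2 s θ j k) (A2 j k) r) :
    r * -pdR (energy hM a0 a1 a2) r θ ρ (fun j => r * η j) =
      2 * (∑ j, ∑ k, hM θ j k * η j * η k) +
      (- (r * A0) * ρ ^ 2 - ρ * (∑ j, (r * A1 j) * η j) + ρ * (∑ j, a1 r θ j * η j)
        - (∑ j, ∑ k, (r * A2 j k) * η j * η k) + 2 * (∑ j, ∑ k, a2 r θ j k * η j * η k)) := by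
  have hsq : HasDerivAt (fun s : ℝ => s ^ 2) (2 * r) r := by
    simpa using hasDerivAt_pow 2 r
  have hr2 : r ^ 2 ≠ 0 := pow_ne_zero 2 hr
  have hs1 : HasDerivAt (fun s : ℝ => ∑ j, a1 s θ j * ρ * (r * η j))
      (∑ j, A1 j * ρ * (r * η j)) r :=
    HasDerivAt.fun_sum fun j _ => ((h1 j).mul_const _).mul_const _
  have hs2 : HasDerivAt (fun s : ℝ => ∑ j, ∑ k, a2 s θ j k * (r * η j) * (r * η k))
      (∑ j, ∑ k, A2 j k * (r * η j) * (r * η k)) r :=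
    HasDerivAt.fun_sum fun j _ => HasDerivAt.fun_sum fun k _ =>
      ((h2 j k).mul_const _).mul_const _
  have H := (((((hasDerivAt_const r (∑ j, ∑ k, hM θ j k * (r * η j) * (r * η k))).fun_div hsq hr2).const_add
    (ρ ^ 2)).fun_add (h0.mul_const (ρ ^ 2))).fun_add (hs1.fun_div (hasDerivAt_id' r) hr)).fun_add
    (hs2.fun_div hsq hr2)
  have H' : pdR (energy hM a0 a1 a2) r θ ρ (fun j => r * η j) = _ := H.deriv
  rw [H']
  have q : ∀ B : Fin m → Fin m → ℝ, ∑ j, ∑ k, B j k * (r * η j) * (r * η k)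
      = r ^ 2 * ∑ j, ∑ k, B j k * η j * η k := by
    intro B
    simp only [Finset.mul_sum]
    exact Finset.sum_congr rfl fun j _ => Finset.sum_congr rfl fun k _ => by ring
  have l : ∀ B : Fin m → ℝ, ∑ j, B j * ρ * (r * η j) = r * ρ * ∑ j, B j * η j := by
    intro B
    simp only [Finset.mul_sum]
    exact Finset.sum_congr rfl fun j _ => by ring
  have l' : ∑ j, (r * A1 j) * η j = r * ∑ j, A1 j * η j := by
    simp only [Finset.mul_sum, mul_assoc]
  have q' : ∑ j, ∑ k, (r * A2 j k) * η j * η k = r * ∑ j, ∑ k, A2 j k * η j * η k := by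
    simp only [Finset.mul_sum, mul_assoc]
  rw [q (hM θ), q (a2 r θ), q A2, l (a1 r θ), l A1, l', q']
  field_simp
  ring

lemma pdTheta_energy {m : ℕ} (hM : (Fin m → ℝ) → Matrix (Fin m) (Fin m) ℝ)
    (a0 : ℝ → (Fin m → ℝ) → ℝ) (a1 : ℝ → (Fin m → ℝ) → Fin m → ℝ)
    (a2 : ℝ → (Fin m → ℝ) → Matrix (Fin m) (Fin m) ℝ) (r : ℝ) (hr : r ≠ 0)
    (θ : Fin m → ℝ) (ρ : ℝ) (η : Fin m → ℝ) (i : Fin m)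
    (hh : ∀ j k, DifferentiableAt ℝ (fun θ => hM θ j k) θ)
    (h0 : DifferentiableAt ℝ (a0 r) θ)
    (h1 : ∀ j, DifferentiableAt ℝ (fun θ => a1 r θ j) θ)
    (h2 : ∀ j k, DifferentiableAt ℝ (fun θ => a2 r θ j k) θ) :
    pdTheta (energy hM a0 a1 a2) i r θ ρ (fun j => r * η j) =
      (∑ j, ∑ k, fderiv ℝ (fun θ => hM θ j k) θ (Pi.single i 1) * η j * η k) +
      pderivTheta i a0 r θ * ρ ^ 2 + ρ * (∑ j, pderivTheta i (fun r θ => a1 r θ j) r θ * η j)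
        + (∑ j, ∑ k, pderivTheta i (fun r θ => a2 r θ j k) r θ * η j * η k) := by
  have hs : ∀ (B : (Fin m → ℝ) → Matrix (Fin m) (Fin m) ℝ),
      (∀ j k, DifferentiableAt ℝ (fun θ => B θ j k) θ) →
      HasFDerivAt (fun θ' => (∑ j, ∑ k, B θ' j k * (r * η j) * (r * η k)) / r ^ 2)
      (∑ j, ∑ k, (η j * η k) • fderiv ℝ (fun θ => B θ j k) θ) θ := by
    intro B hB
    have : ∀ θ', (∑ j, ∑ k, B θ' j k * (r * η j) * (r * η k)) / r ^ 2
        = ∑ j, ∑ k, (η j * η k) * B θ' j k := by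
      intro θ'
      simp only [Finset.sum_div]
      exact Finset.sum_congr rfl fun j _ => Finset.sum_congr rfl fun k _ => by field_simp
    simp only [this]
    exact HasFDerivAt.fun_sum fun j _ => HasFDerivAt.fun_sum fun k _ =>
      (hB j k).hasFDerivAt.const_mul _
  have hl : HasFDerivAt (fun θ' => (∑ j, a1 r θ' j * ρ * (r * η j)) / r)
      (∑ j, (ρ * η j) • fderiv ℝ (fun θ => a1 r θ j) θ) θ := by
    have : ∀ θ', (∑ j, a1 r θ' j * ρ * (r * η j)) / r = ∑ j, (ρ * η j) * a1 r θ' j := by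
      intro θ'
      simp only [Finset.sum_div]
      exact Finset.sum_congr rfl fun j _ => by field_simp
    simp only [this]
    exact HasFDerivAt.fun_sum fun j _ => (h1 j).hasFDerivAt.const_mul _
  have H := (((((hs hM hh).const_add (ρ ^ 2)).fun_add (h0.hasFDerivAt.mul_const (ρ ^ 2))).fun_add
    hl).fun_add (hs (a2 r) h2))
  have H' : fderiv ℝ (fun θ' => energy hM a0 a1 a2 r θ' ρ (fun j => r * η j)) θ = _ := H.fderiv
  unfold pdTheta
  rw [H']
  simp only [_root_.add_apply, _root_.sum_apply,
    _root_.smul_apply, smul_eq_mul, pderivTheta, Finset.mul_sum]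
  congr 1
  · congr 1
    · congr 1
      · exact Finset.sum_congr rfl fun j _ => Finset.sum_congr rfl fun k _ => by ring
      · ring
    · exact Finset.sum_congr rfl fun j _ => by ring
  · exact Finset.sum_congr rfl fun j _ => Finset.sum_congr rfl fun k _ => by ring

lemma pdOmega_energy {m : ℕ} (hM : (Fin m → ℝ) → Matrix (Fin m) (Fin m) ℝ)
    (a0 : ℝ → (Fin m → ℝ) → ℝ) (a1 : ℝ → (Fin m → ℝ) → Fin m → ℝ)
    (a2 : ℝ → (Fin m → ℝ) → Matrix (Fin m) (Fin m) ℝ) (r : ℝ) (hr : r ≠ 0)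
    (θ : Fin m → ℝ) (ρ : ℝ) (η : Fin m → ℝ) (i : Fin m) :
    r * pdOmega (energy hM a0 a1 a2) i r θ ρ (fun j => r * η j) =
      (∑ k, (hM θ i k + hM θ k i) * η k) + ρ * a1 r θ i
        + (∑ k, (a2 r θ i k + a2 r θ k i) * η k) := by
  set ω : Fin m → ℝ := fun j => r * η j with hω
  have hp : ∀ j, HasFDerivAt (fun ω' : Fin m → ℝ => ω' j)
      (ContinuousLinearMap.proj (R := ℝ) (φ := fun _ : Fin m => ℝ) j) ω := fun j =>
    hasFDerivAt_apply j ω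
  have hs : ∀ (B : Matrix (Fin m) (Fin m) ℝ),
      ∃ L : (Fin m → ℝ) →L[ℝ] ℝ,
        HasFDerivAt (fun ω' : Fin m → ℝ => (∑ j, ∑ k, B j k * ω' j * ω' k) / r ^ 2) L ω ∧
        r * L (Pi.single i 1) = ∑ k, (B i k + B k i) * η k := by
    intro B
    have h1 : HasFDerivAt (fun ω' : Fin m → ℝ => ∑ j, ∑ k, B j k * ω' j * ω' k) _ ω :=
      HasFDerivAt.fun_sum fun j _ => HasFDerivAt.fun_sum fun k _ =>
        ((hp j).const_mul (B j k)).fun_mul (hp k)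
    simp only [div_eq_mul_inv]
    refine ⟨_, h1.mul_const ((r ^ 2)⁻¹), ?_⟩
    simp only [_root_.add_apply, _root_.sum_apply,
      _root_.smul_apply, smul_eq_mul, ContinuousLinearMap.proj_apply,
      Pi.single_apply, hω, Finset.sum_add_distrib, mul_ite, mul_one, mul_zero,
      Finset.sum_ite_eq', Finset.sum_ite_eq, Finset.mem_univ, if_true, add_mul]
    rw [Finset.sum_comm (f := fun j k => if j = i then r * η k * B j k else 0)]
    simp only [Finset.sum_ite_eq', Finset.mem_univ, if_true]
    rw [mul_add, mul_add, add_comm]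
    simp only [Finset.mul_sum]
    congr 1
    · exact Finset.sum_congr rfl fun j _ => by field_simp
    · exact Finset.sum_congr rfl fun j _ => by field_simp
  obtain ⟨L1, hL1, e1⟩ := hs (hM θ)
  obtain ⟨L2, hL2, e2⟩ := hs (a2 r θ)
  have hl : HasFDerivAt (fun ω' : Fin m → ℝ => (∑ j, a1 r θ j * ρ * ω' j) * r⁻¹) _ ω :=
    (HasFDerivAt.fun_sum fun j _ => (hp j).const_mul (a1 r θ j * ρ)).mul_const r⁻¹
  simp only [← div_eq_mul_inv] at hl
  have H := ((((hL1.const_add (ρ ^ 2)).add_const (a0 r θ * ρ ^ 2)).fun_add hl).fun_add hL2)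
  have H' : fderiv ℝ (fun ω' => energy hM a0 a1 a2 r θ ρ ω') ω = _ := H.fderiv
  unfold pdOmega
  rw [H', _root_.add_apply, _root_.add_apply, mul_add, mul_add, e1, e2]
  congr 2
  simp only [_root_.sum_apply,
      _root_.smul_apply, smul_eq_mul, ContinuousLinearMap.proj_apply,
      Pi.single_apply, mul_ite, mul_one, mul_zero,
      Finset.sum_ite_eq', Finset.sum_ite_eq, Finset.mem_univ, if_true]
  field_simp

lemma energy_eta {m : ℕ} (hM : (Fin m → ℝ) → Matrix (Fin m) (Fin m) ℝ)
    (a0 : ℝ → (Fin m → ℝ) → ℝ) (a1 : ℝ → (Fin m → ℝ) → Fin m → ℝ)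
    (a2 : ℝ → (Fin m → ℝ) → Matrix (Fin m) (Fin m) ℝ) (r : ℝ) (hr : r ≠ 0)
    (θ : Fin m → ℝ) (ρ : ℝ) (η : Fin m → ℝ) :
    energy hM a0 a1 a2 r θ ρ (fun j => r * η j) =
      ρ ^ 2 + (∑ j, ∑ k, hM θ j k * η j * η k) + (a0 r θ * ρ ^ 2
        + ρ * (∑ j, a1 r θ j * η j) + (∑ j, ∑ k, a2 r θ j k * η j * η k)) := by
  have q : ∀ B : Fin m → Fin m → ℝ, ∑ j, ∑ k, B j k * (r * η j) * (r * η k)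
      = r ^ 2 * ∑ j, ∑ k, B j k * η j * η k := by
    intro B
    simp only [Finset.mul_sum]
    exact Finset.sum_congr rfl fun j _ => Finset.sum_congr rfl fun k _ => by ring
  have l : ∀ B : Fin m → ℝ, ∑ j, B j * ρ * (r * η j) = r * ρ * ∑ j, B j * η j := by
    intro B
    simp only [Finset.mul_sum]
    exact Finset.sum_congr rfl fun j _ => by ring
  unfold energy
  rw [q (hM θ), q (a2 r θ), l (a1 r θ)]
  field_simp
  ring

open Asymptotics in
lemma bigO_main {X : Type*} {m : ℕ} (l : Filter X) (w ρ a0 ra0 : X → ℝ) (ta0 : Fin m → X → ℝ)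
    (η a1 ra1 : Fin m → X → ℝ) (ta1 : Fin m → Fin m → X → ℝ)
    (h a2 ra2 : Fin m → Fin m → X → ℝ) (th ta2 : Fin m → Fin m → Fin m → X → ℝ)
    (hw : w =O[l] (fun _ => (1:ℝ))) (hρ : ρ =O[l] (fun _ => (1:ℝ)))
    (hη : ∀ j, η j =O[l] (fun _ => (1:ℝ)))
    (hh : ∀ j k, h j k =O[l] (fun _ => (1:ℝ)))
    (hth : ∀ i j k, th i j k =O[l] (fun _ => (1:ℝ)))
    (h0 : a0 =O[l] w) (hr0 : ra0 =O[l] w) (ht0 : ∀ i, ta0 i =O[l] w)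
    (h1 : ∀ j, a1 j =O[l] w) (hr1 : ∀ j, ra1 j =O[l] w) (ht1 : ∀ i j, ta1 i j =O[l] w)
    (h2 : ∀ j k, a2 j k =O[l] w) (hr2 : ∀ j k, ra2 j k =O[l] w)
    (ht2 : ∀ i j k, ta2 i j k =O[l] w)
    (vr rvρ p : X → ℝ) (rvθ vω : Fin m → X → ℝ)
    (evr : ∀ x, vr x = 2 * ρ x * (1 + a0 x) + ∑ j, a1 j x * η j x)
    (ervρ : ∀ x, rvρ x = 2 * (∑ j, ∑ k, h j k x * η j x * η k x) +
      (- ra0 x * ρ x ^ 2 - ρ x * (∑ j, ra1 j x * η j x) + ρ x * (∑ j, a1 j x * η j x)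
        - (∑ j, ∑ k, ra2 j k x * η j x * η k x) + 2 * (∑ j, ∑ k, a2 j k x * η j x * η k x)))
    (ervθ : ∀ i x, rvθ i x = (∑ k, (h i k x + h k i x) * η k x) + ρ x * a1 i x
        + (∑ k, (a2 i k x + a2 k i x) * η k x))
    (evω : ∀ i x, vω i x = -((∑ j, ∑ k, th i j k x * η j x * η k x) +
      ta0 i x * ρ x ^ 2 + ρ x * (∑ j, ta1 i j x * η j x)
        + (∑ j, ∑ k, ta2 i j k x * η j x * η k x)))
    (ep : ∀ x, p x = ρ x ^ 2 + (∑ j, ∑ k, h j k x * η j x * η k x) + (a0 x * ρ x ^ 2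
        + ρ x * (∑ j, a1 j x * η j x) + (∑ j, ∑ k, a2 j k x * η j x * η k x))) :
    (fun x => 4 * (vr x * ρ x + rvρ x) * (1 + a0 x)
      + 4 * ρ x * (ra0 x * vr x + ∑ i, ta0 i x * rvθ i x)
      + 2 * ∑ j, ((ra1 j x * vr x + ∑ i, ta1 i j x * rvθ i x) * η j x + a1 j x * vω j x)
      - 8 * p x) =O[l] w := by
  have mulR : ∀ {f g : X → ℝ}, f =O[l] w → g =O[l] (fun _ => (1:ℝ)) →
      (fun x => f x * g x) =O[l] w := fun hf hg => by simpa using hf.mul hg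
  have mulL : ∀ {f g : X → ℝ}, f =O[l] (fun _ => (1:ℝ)) → g =O[l] w →
      (fun x => f x * g x) =O[l] w := fun hf hg => by simpa using hf.mul hg
  have mul1 : ∀ {f g : X → ℝ}, f =O[l] (fun _ => (1:ℝ)) → g =O[l] (fun _ => (1:ℝ)) →
      (fun x => f x * g x) =O[l] (fun _ => (1:ℝ)) := fun hf hg => by simpa using hf.mul hg
  have cst : ∀ c : ℝ, (fun _ : X => c) =O[l] (fun _ => (1:ℝ)) := fun c =>
    isBigO_const_const c one_ne_zero l
  have hρ2 : (fun x => ρ x ^ 2) =O[l] (fun _ => (1:ℝ)) := by simpa using hρ.pow 2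
  have h0' : (fun x => 1 + a0 x) =O[l] (fun _ => (1:ℝ)) := (cst 1).add (h0.trans hw)
  have lin : ∀ {b : Fin m → X → ℝ}, (∀ j, b j =O[l] w) →
      (fun x => ∑ j, b j x * η j x) =O[l] w := fun hb =>
    IsBigO.fun_sum fun j _ => mulR (hb j) (hη j)
  have quad : ∀ {b : Fin m → Fin m → X → ℝ}, (∀ j k, b j k =O[l] w) →
      (fun x => ∑ j, ∑ k, b j k x * η j x * η k x) =O[l] w := fun hb =>
    IsBigO.fun_sum fun j _ => IsBigO.fun_sum fun k _ => mulR (mulR (hb j k) (hη j)) (hη k)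
  have quad1 : ∀ {b : Fin m → Fin m → X → ℝ}, (∀ j k, b j k =O[l] (fun _ => (1:ℝ))) →
      (fun x => ∑ j, ∑ k, b j k x * η j x * η k x) =O[l] (fun _ => (1:ℝ)) := fun hb =>
    IsBigO.fun_sum fun j _ => IsBigO.fun_sum fun k _ => mul1 (mul1 (hb j k) (hη j)) (hη k)
  have E2 : (fun x => (- ra0 x * ρ x ^ 2 - ρ x * (∑ j, ra1 j x * η j x)
        + ρ x * (∑ j, a1 j x * η j x)
        - (∑ j, ∑ k, ra2 j k x * η j x * η k x)
        + 2 * (∑ j, ∑ k, a2 j k x * η j x * η k x))) =O[l] w :=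
    ((((mulR hr0.neg_left hρ2).sub (mulL hρ (lin hr1))).add (mulL hρ (lin h1))).sub
      (quad hr2)).add (mulL (cst 2) (quad h2))
  have E3 : (fun x => (a0 x * ρ x ^ 2
        + ρ x * (∑ j, a1 j x * η j x) + (∑ j, ∑ k, a2 j k x * η j x * η k x))) =O[l] w :=
    ((mulR h0 hρ2).add (mulL hρ (lin h1))).add (quad h2)
  have Vr : vr =O[l] (fun _ => (1:ℝ)) := by
    rw [funext evr]
    exact (mul1 (mul1 (cst 2) hρ) h0').add ((lin h1).trans hw)
  have Vθ : ∀ i, rvθ i =O[l] (fun _ => (1:ℝ)) := by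
    intro i
    rw [funext (ervθ i)]
    exact ((IsBigO.fun_sum fun k _ => mul1 ((hh i k).add (hh k i)) (hη k)).add
      (mul1 hρ ((h1 i).trans hw))).add
      (IsBigO.fun_sum fun k _ => mul1 (((h2 i k).add (h2 k i)).trans hw) (hη k))
  have Vω : ∀ i, vω i =O[l] (fun _ => (1:ℝ)) := by
    intro i
    rw [funext (evω i)]
    exact ((((quad1 (hth i)).add (mul1 ((ht0 i).trans hw) hρ2)).add
      (mul1 hρ ((lin (ht1 i)).trans hw))).add ((quad (ht2 i)).trans hw)).neg_left
  have T2 : (fun x => 4 * ρ x * (ra0 x * vr x + ∑ i, ta0 i x * rvθ i x)) =O[l] w :=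
    mulL (mul1 (cst 4) hρ) ((mulR hr0 Vr).add (IsBigO.fun_sum fun i _ => mulR (ht0 i) (Vθ i)))
  have T3 : (fun x => 2 * ∑ j, ((ra1 j x * vr x + ∑ i, ta1 i j x * rvθ i x) * η j x
      + a1 j x * vω j x)) =O[l] w :=
    mulL (cst 2) (IsBigO.fun_sum fun j _ => (mulR ((mulR (hr1 j) Vr).add
      (IsBigO.fun_sum fun i _ => mulR (ht1 i j) (Vθ i))) (hη j)).add (mulR (h1 j) (Vω j)))
  have T1 : (fun x => 4 * (vr x * ρ x + rvρ x) * (1 + a0 x) - 8 * p x) =O[l] w := by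
    have Q := quad1 hh
    have e : (fun x => 4 * (vr x * ρ x + rvρ x) * (1 + a0 x) - 8 * p x) = fun x =>
        a0 x * (8 * (ρ x ^ 2 + ∑ j, ∑ k, h j k x * η j x * η k x))
        + (((2 * ρ x * a0 x + ∑ j, a1 j x * η j x) * ρ x +
        (- ra0 x * ρ x ^ 2 - ρ x * (∑ j, ra1 j x * η j x)
        + ρ x * (∑ j, a1 j x * η j x)
        - (∑ j, ∑ k, ra2 j k x * η j x * η k x)
        + 2 * (∑ j, ∑ k, a2 j k x * η j x * η k x))) * (4 * (1 + a0 x))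
        - 8 * (a0 x * ρ x ^ 2
        + ρ x * (∑ j, a1 j x * η j x) + (∑ j, ∑ k, a2 j k x * η j x * η k x))) := by
      funext x
      rw [evr, ervρ, ep]
      ring
    rw [e]
    exact (mulR h0 (mul1 (cst 8) (hρ2.add Q))).add
      ((mulR ((mulR ((mulL (mul1 (cst 2) hρ) h0).add (lin h1)) hρ).add E2)
        (mul1 (cst 4) h0')).sub (mulL (cst 8) E3))
  have := (T1.add T2).add T3
  refine this.congr_left fun x => ?_
  ring

open Asymptotics in
lemma decay_bigO {m : ℕ} {f : ℝ → (Fin m → ℝ) → ℝ} {μ ν : ℝ} (hν : μ ≤ ν)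
    {K : Set (Fin m → ℝ)} (hf : DecayOn f ν 1 K) (S : Set (Phase m))
    (hS : ∀ x ∈ S, 1 < x.1 ∧ x.2.1 ∈ K) :
    (fun x : Phase m => f x.1 x.2.1) =O[𝓟 S] (fun x => x.1 ^ (-μ)) ∧
    (fun x : Phase m => x.1 * pderivR f x.1 x.2.1) =O[𝓟 S] (fun x => x.1 ^ (-μ)) ∧
    ∀ i, (fun x : Phase m => pderivTheta i f x.1 x.2.1) =O[𝓟 S] (fun x => x.1 ^ (-μ)) := by
  have key : ∀ (C r : ℝ), 0 < C → 1 < r → C * r ^ (-ν) ≤ C * ‖r ^ (-μ)‖ := by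
    intro C r hC hr
    rw [Real.norm_of_nonneg (Real.rpow_nonneg (by linarith) _)]
    exact mul_le_mul_of_nonneg_left
      (Real.rpow_le_rpow_of_exponent_le hr.le (by linarith)) hC.le
  refine ⟨?_, ?_, fun i => ?_⟩
  · obtain ⟨C, hC, h⟩ := hf 0 []
    refine isBigO_principal.2 ⟨C, fun x hx => ?_⟩
    have := h x.1 (hS x hx).1 x.2.1 (hS x hx).2
    simp only [Nat.cast_zero, sub_zero] at this
    exact this.trans (key C x.1 hC (hS x hx).1)
  · obtain ⟨C, hC, h⟩ := hf 1 []
    refine isBigO_principal.2 ⟨C, fun x hx => ?_⟩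
    have h1 := (hS x hx).1
    have := h x.1 h1 x.2.1 (hS x hx).2
    simp only [Nat.cast_one] at this
    rw [Real.rpow_sub_one (by linarith)] at this
    refine le_trans ?_ (key C x.1 hC h1)
    rw [norm_mul, Real.norm_of_nonneg (by linarith : (0:ℝ) ≤ x.1)]
    calc x.1 * ‖pderivR f x.1 x.2.1‖ ≤ x.1 * (C * (x.1 ^ (-ν) / x.1)) :=
          mul_le_mul_of_nonneg_left this (by linarith)
      _ = C * x.1 ^ (-ν) := by
          have : x.1 ≠ 0 := by linarith
          field_simp
  · obtain ⟨C, hC, h⟩ := hf 0 [i]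
    refine isBigO_principal.2 ⟨C, fun x hx => ?_⟩
    have := h x.1 (hS x hx).1 x.2.1 (hS x hx).2
    simp only [Nat.cast_zero, sub_zero] at this
    exact this.trans (key C x.1 hC (hS x hx).1)

open Asymptotics in
lemma cont_bigO {m : ℕ} {f : (Fin m → ℝ) → ℝ} {K : Set (Fin m → ℝ)} (hK : IsCompact K)
    (hf : ContinuousOn f K) (S : Set (Phase m)) (hS : ∀ x ∈ S, x.2.1 ∈ K) :
    (fun x : Phase m => f x.2.1) =O[𝓟 S] (fun _ => (1:ℝ)) := by
  obtain ⟨C, hC⟩ := hK.exists_bound_of_continuousOn hf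
  exact isBigO_principal.2 ⟨C, fun x hx => by simpa using hC _ (hS x hx)⟩

/-- Along trajectories of energy `p₀` that lie far out in the end,
`(d²/dt²)(r(t)²) = 8p₀ + O(r(t)^{-μ})`. -/
theorem statement_3 {m : ℕ} (hm : 1 ≤ m) {μ : ℝ} (hμ : μ ∈ Ioo (0:ℝ) 1)
    {U : Set (Fin m → ℝ)} (hU : IsOpen U) (c : Coeffs m μ U)
    (K : Set (Fin m → ℝ)) (hK : IsCompact K) (hKU : K ⊆ U)
    (C₀ : ℝ) (hC₀ : 0 < C₀) :
    ∃ R ≥ (1:ℝ), ∃ C > (0:ℝ),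
      ∀ (I : Set ℝ), IsOpen I →
      ∀ (r : ℝ → ℝ) (θ : ℝ → Fin m → ℝ) (ρ : ℝ → ℝ) (ω : ℝ → Fin m → ℝ) (p₀ : ℝ),
        IsHamSolOn c.p r θ ρ ω I →
        (∀ t ∈ I, c.p (r t) (θ t) (ρ t) (ω t) = p₀) →
        ∀ t ∈ I, r t ∈ Ioi R → θ t ∈ K → |ρ t| ≤ C₀ → eNorm (ω t) ≤ C₀ * r t →
          ∃ d2 : ℝ, HasDerivAt (fun s => deriv (fun u => (r u) ^ 2) s) d2 t ∧
            |d2 - 8 * p₀| ≤ C * (r t) ^ (-μ) := by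
  set S : Set (Phase m) := {x | 1 < x.1 ∧ x.2.1 ∈ K ∧ |x.2.2.1| ≤ C₀ ∧
    eNorm x.2.2.2 ≤ C₀ * x.1} with hSdef
  have hS : ∀ x ∈ S, 1 < x.1 ∧ x.2.1 ∈ K := fun x hx => ⟨hx.1, hx.2.1⟩
  have D0 := decay_bigO (by linarith : μ ≤ 1 + μ) (c.a0_decay K hK hKU) S hS
  have D1 := fun j => decay_bigO le_rfl (c.a1_decay K hK hKU j) S hS
  have D2 := fun j k => decay_bigO le_rfl (c.a2_decay K hK hKU j k) S hS
  have B := bigO_main (m := m) (𝓟 S) (fun x : Phase m => x.1 ^ (-μ)) (fun x => x.2.2.1)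
    (fun x => c.a0 x.1 x.2.1) (fun x => x.1 * pderivR c.a0 x.1 x.2.1)
    (fun i x => pderivTheta i c.a0 x.1 x.2.1) (fun j x => x.2.2.2 j / x.1)
    (fun j x => c.a1 x.1 x.2.1 j)
    (fun j x => x.1 * pderivR (fun r θ => c.a1 r θ j) x.1 x.2.1)
    (fun i j x => pderivTheta i (fun r θ => c.a1 r θ j) x.1 x.2.1)
    (fun j k x => c.hM x.2.1 j k) (fun j k x => c.a2 x.1 x.2.1 j k)
    (fun j k x => x.1 * pderivR (fun r θ => c.a2 r θ j k) x.1 x.2.1)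
    (fun i j k x => fderiv ℝ (fun θ => c.hM θ j k) x.2.1 (Pi.single i 1))
    (fun i j k x => pderivTheta i (fun r θ => c.a2 r θ j k) x.1 x.2.1)
    (by
      refine Asymptotics.isBigO_principal.2 ⟨1, fun x hx => ?_⟩
      have h1 := hx.1
      rw [Real.norm_of_nonneg (Real.rpow_nonneg (by linarith) _)]
      simpa using Real.rpow_le_one_of_one_le_of_nonpos h1.le (by linarith [hμ.1] : -μ ≤ 0))
    (Asymptotics.isBigO_principal.2 ⟨C₀, fun x hx => by simpa using hx.2.2.1⟩)
    (by
      intro j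
      refine Asymptotics.isBigO_principal.2 ⟨C₀, fun x hx => ?_⟩
      have h1 : 0 < x.1 := by linarith [hx.1]
      have h2 : |x.2.2.2 j| ≤ eNorm x.2.2.2 := by
        unfold eNorm
        apply Real.abs_le_sqrt
        exact Finset.single_le_sum (f := fun j => x.2.2.2 j ^ 2) (fun _ _ => sq_nonneg _)
          (Finset.mem_univ j)
      rw [norm_div, Real.norm_of_nonneg h1.le, div_le_iff₀ h1]
      simpa using h2.trans hx.2.2.2)
    (fun j k => cont_bigO hK ((c.hM_smooth j k).continuousOn.mono hKU) S fun x hx => hx.2.1)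
    (fun i j k => cont_bigO (f := fun θ => fderiv ℝ (fun θ => c.hM θ j k) θ (Pi.single i 1)) hK
      ((((c.hM_smooth j k).continuousOn_fderiv_of_isOpen hU (by simp)).clm_apply
        continuousOn_const).mono hKU) S fun x hx => hx.2.1)
    D0.1 D0.2.1 D0.2.2 (fun j => (D1 j).1) (fun j => (D1 j).2.1) (fun i j => (D1 j).2.2 i)
    (fun j k => (D2 j k).1) (fun j k => (D2 j k).2.1) (fun i j k => (D2 j k).2.2 i)
    _ _ _ _ _ (fun _ => rfl) (fun _ => rfl) (fun _ _ => rfl) (fun _ _ => rfl) (fun _ => rfl)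
  obtain ⟨C, hC⟩ := Asymptotics.isBigO_principal.1 B
  refine ⟨1, le_rfl, max C 1, by positivity, ?_⟩
  intro I hI r θ ρ ω p₀ hsol hp t ht hrt hθt hρt hωt
  have hr1 : 1 < r t := hrt
  have hr0 : r t ≠ 0 := by linarith
  have hbound := hC (r t, θ t, ρ t, ω t) ⟨hrt, hθt, hρt, hωt⟩
  obtain ⟨sr, sθ, sρ, sω⟩ := hsol t ht
  set η : Fin m → ℝ := fun j => ω t j / r t with hη
  have hωη : ω t = fun j => r t * η j := by
    funext j
    simp only [hη]
    field_simp
  have hopen : IsOpen (Ioi (1:ℝ) ×ˢ U) := isOpen_Ioi.prod hU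
  have hmem : (r t, θ t) ∈ Ioi (1:ℝ) ×ˢ U := ⟨hrt, hKU hθt⟩
  have d0 := (c.a0_smooth.differentiableOn (by simp)).differentiableAt (hopen.mem_nhds hmem)
  have d1 := fun j =>
    ((c.a1_smooth j).differentiableOn (by simp)).differentiableAt (hopen.mem_nhds hmem)
  have d2 := fun j k =>
    ((c.a2_smooth j k).differentiableOn (by simp)).differentiableAt (hopen.mem_nhds hmem)
  have dh := fun j k =>
    ((c.hM_smooth j k).differentiableOn (by simp)).differentiableAt (hU.mem_nhds (hKU hθt))
  have s0 := diff_slices d0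
  have s1 := fun j => diff_slices (f := fun r θ => c.a1 r θ j) (d1 j)
  have s2 := fun j k => diff_slices (f := fun r θ => c.a2 r θ j k) (d2 j k)
  -- velocities
  have eρ := pdR_energy c.hM c.a0 c.a1 c.a2 (r t) hr0 (θ t) (ρ t) η _ _ _ s0.1
    (fun j => (s1 j).1) (fun j k => (s2 j k).1)
  have eθ := pdOmega_energy c.hM c.a0 c.a1 c.a2 (r t) hr0 (θ t) (ρ t) η
  have eω := fun i => pdTheta_energy c.hM c.a0 c.a1 c.a2 (r t) hr0 (θ t) (ρ t) η i dh s0.2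
    (fun j => (s1 j).2) (fun j k => (s2 j k).2)
  have er := pdRho_energy c.hM c.a0 c.a1 c.a2 (r t) (θ t) (ρ t) (ω t)
  have ep := energy_eta c.hM c.a0 c.a1 c.a2 (r t) hr0 (θ t) (ρ t) η
  rw [← hωη] at eρ eθ eω ep
  have hp0 : energy c.hM c.a0 c.a1 c.a2 (r t) (θ t) (ρ t) (ω t) = p₀ := hp t ht
  change HasDerivAt r (pdRho (energy c.hM c.a0 c.a1 c.a2) (r t) (θ t) (ρ t) (ω t)) t at sr
  change ∀ j, HasDerivAt (fun s => θ s j)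
    (pdOmega (energy c.hM c.a0 c.a1 c.a2) j (r t) (θ t) (ρ t) (ω t)) t at sθ
  change HasDerivAt ρ (-pdR (energy c.hM c.a0 c.a1 c.a2) (r t) (θ t) (ρ t) (ω t)) t at sρ
  change ∀ j, HasDerivAt (fun s => ω s j)
    (-pdTheta (energy c.hM c.a0 c.a1 c.a2) j (r t) (θ t) (ρ t) (ω t)) t at sω
  generalize hvr : pdRho (energy c.hM c.a0 c.a1 c.a2) (r t) (θ t) (ρ t) (ω t) = vr at sr er
  generalize hvθ : (fun j => pdOmega (energy c.hM c.a0 c.a1 c.a2) j (r t) (θ t) (ρ t) (ω t)) = vθ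
  have hvθ' : ∀ j, pdOmega (energy c.hM c.a0 c.a1 c.a2) j (r t) (θ t) (ρ t) (ω t) = vθ j :=
    fun j => congrFun hvθ j
  simp only [hvθ'] at sθ eθ
  generalize hvρ : -pdR (energy c.hM c.a0 c.a1 c.a2) (r t) (θ t) (ρ t) (ω t) = vρ at sρ eρ
  generalize hvω : (fun j => pdTheta (energy c.hM c.a0 c.a1 c.a2) j (r t) (θ t) (ρ t) (ω t)) = vω
  have hvω' : ∀ j, pdTheta (energy c.hM c.a0 c.a1 c.a2) j (r t) (θ t) (ρ t) (ω t) = vω j :=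
    fun j => congrFun hvω j
  simp only [hvω'] at sω eω
  -- first derivative near t
  have hev : (fun s => deriv (fun u => (r u) ^ 2) s) =ᶠ[𝓝 t] fun s =>
      4 * (r s * ρ s) * (1 + c.a0 (r s) (θ s)) + 2 * ∑ j, c.a1 (r s) (θ s) j * ω s j := by
    have hnear : ∀ᶠ s in 𝓝 t, 1 < r s := sr.continuousAt.eventually (lt_mem_nhds hr1)
    filter_upwards [hnear, hI.mem_nhds ht] with s hs1 hsI
    have h1 := (hsol s hsI).1.pow 2
    have h2 : deriv (fun u => (r u) ^ 2) s = _ := h1.deriv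
    have h3 : r s ≠ 0 := by linarith
    rw [h2]
    change _ * pdRho (energy c.hM c.a0 c.a1 c.a2) _ _ _ _ = _
    rw [pdRho_energy]
    have : ∑ j, c.a1 (r s) (θ s) j * ω s j
        = r s * ∑ j, c.a1 (r s) (θ s) j * (ω s j / r s) := by
      rw [Finset.mul_sum]
      exact Finset.sum_congr rfl fun j _ => by field_simp
    rw [this]
    push_cast
    ring
  have c0 := chain_rule d0 sr sθ
  have c1 := fun j => chain_rule (f := fun r θ => c.a1 r θ j) (d1 j) sr sθ
  have hD := (((sr.fun_mul sρ).const_mul 4).fun_mul (c0.const_add 1)).fun_add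
    ((HasDerivAt.fun_sum (u := Finset.univ) fun j _ => (c1 j).fun_mul (sω j)).const_mul 2)
  refine ⟨_, hD.congr_of_eventuallyEq hev, ?_⟩
  have hrpos : 0 ≤ r t ^ (-μ) := Real.rpow_nonneg (by linarith) _
  have hfin : ‖_‖ ≤ max C 1 * r t ^ (-μ) := hbound.trans (by
    rw [Real.norm_of_nonneg hrpos]
    exact mul_le_mul_of_nonneg_right (le_max_left _ _) hrpos)
  refine le_trans (le_of_eq ?_) hfin
  rw [Real.norm_eq_abs]
  congr 1
  have fη : ∀ j, ω t j / r t = η j := fun j => rfl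
  simp only [fη] at er ⊢
  simp only [← er, ← eρ, ← eθ, ← eω, ← ep, hp0]
  have k0 : ∑ i, pderivTheta i c.a0 (r t) (θ t) * (r t * vθ i)
      = r t * ∑ i, pderivTheta i c.a0 (r t) (θ t) * vθ i := by
    rw [Finset.mul_sum]
    exact Finset.sum_congr rfl fun j _ => by ring
  have k1 : ∀ j, ∑ i, pderivTheta i (fun r θ => c.a1 r θ j) (r t) (θ t) * (r t * vθ i)
      = r t * ∑ i, pderivTheta i (fun r θ => c.a1 r θ j) (r t) (θ t) * vθ i := by
    intro j
    rw [Finset.mul_sum]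
    exact Finset.sum_congr rfl fun j _ => by ring
  have k2 : ∀ j, ω t j = r t * η j := fun j => congrFun hωη j
  simp only [k0, k1, k2]
  have k3 : ∀ x y : Fin m → ℝ, x = y → ∑ j, x j = ∑ j, y j := by
    rintro x y rfl; rfl
  have k4 : ∀ A A' B B' D : ℝ, A = A' → B = B' → A + B - D = A' + B' - D := by
    rintro A A' B B' D rfl rfl; rfl
  apply k4
  · ring
  · congr 1
    exact Finset.sum_congr rfl fun j _ => by ring

end Scattering
end

section
/- (Lemma 2.1, escape estimate.) Let K ⊆ U be compact, T₀ ∈ ℝ, and let (r(t),θ(t),ρ(t),ω(t)) : (−∞,T₀] → (1,∞)×K×ℝ×ℝ^{n-1} be a solution of the Hamiltonian system with energy p₀ > 0 such that r(t) → ∞ as t → −∞. Then there exists C > 0 such that r(t) > C^{-1}|t| − C for all t < −C. -/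
open Real Set Filter Topology

namespace Scattering

lemma coercive_aux {m : ℕ} (h : (Fin m → ℝ) → Matrix (Fin m) (Fin m) ℝ)
    (K : Set (Fin m → ℝ)) (hK : IsCompact K)
    (hc : ∀ j k, ContinuousOn (fun θ => h θ j k) K)
    (hp : ∀ θ ∈ K, (h θ).PosDef) :
    ∃ l > (0:ℝ), l ≤ 1 ∧ ∀ θ ∈ K, ∀ w : Fin m → ℝ,
      l * ‖w‖ ^ 2 ≤ ∑ j, ∑ k, h θ j k * w j * w k := by
  have hcomp : IsCompact (K ×ˢ Metric.sphere (0 : Fin m → ℝ) 1) :=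
    hK.prod (isCompact_sphere _ _)
  have hcont : ContinuousOn (fun z : (Fin m → ℝ) × (Fin m → ℝ) =>
      ∑ j, ∑ k, h z.1 j k * z.2 j * z.2 k) (K ×ˢ Metric.sphere (0 : Fin m → ℝ) 1) := by
    refine continuousOn_finsetSum _ fun j _ => continuousOn_finsetSum _ fun k _ => ?_
    have h1 : ContinuousOn (fun z : (Fin m → ℝ) × (Fin m → ℝ) => h z.1 j k)
        (K ×ˢ Metric.sphere (0 : Fin m → ℝ) 1) :=
      (hc j k).comp continuous_fst.continuousOn (fun z hz => hz.1)
    have h2 : ∀ i, Continuous (fun z : (Fin m → ℝ) × (Fin m → ℝ) => z.2 i) := by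
      intro i; fun_prop
    exact (h1.mul (h2 j).continuousOn).mul (h2 k).continuousOn
  have hq : ∀ θ ∈ K, ∀ w : Fin m → ℝ, w ≠ 0 → 0 < ∑ j, ∑ k, h θ j k * w j * w k := by
    intro θ hθ w hw
    have := (hp θ hθ).dotProduct_mulVec_pos hw
    simp only [dotProduct, Matrix.mulVec, Finset.mul_sum, Pi.star_apply, star_trivial] at this
    refine this.trans_eq ?_
    refine Finset.sum_congr rfl fun j _ => Finset.sum_congr rfl fun k _ => ?_
    ring
  obtain ⟨a, ha, hb⟩ := hcomp.exists_forall_le' hcont (a := 0) (by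
    rintro ⟨θ, w⟩ ⟨hθ, hw⟩
    refine hq θ hθ w ?_
    rintro rfl
    simp at hw)
  refine ⟨min a 1, lt_min ha one_pos, min_le_right _ _, fun θ hθ w => ?_⟩
  by_cases hw : w = 0
  · subst hw; simp
  have hn : 0 < ‖w‖ := norm_pos_iff.2 hw
  have := hb (θ, ‖w‖⁻¹ • w) ⟨hθ, by simp [norm_smul, hn.ne']⟩
  simp only [Pi.smul_apply, smul_eq_mul] at this
  have e : ∑ j, ∑ k, h θ j k * (‖w‖⁻¹ * w j) * (‖w‖⁻¹ * w k)
      = (∑ j, ∑ k, h θ j k * w j * w k) / ‖w‖ ^ 2 := by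
    rw [Finset.sum_div]
    refine Finset.sum_congr rfl fun j _ => ?_
    rw [Finset.sum_div]
    refine Finset.sum_congr rfl fun k _ => ?_
    field_simp
  rw [e, le_div_iff₀ (by positivity)] at this
  refine le_trans ?_ this
  gcongr
  exact min_le_left _ _

lemma decay_aux {m : ℕ} (f : ℝ → (Fin m → ℝ) → ℝ) (ν : ℝ) (hν : 0 < ν)
    (K : Set (Fin m → ℝ)) (hf : DecayOn f ν 1 K) (ε : ℝ) (hε : 0 < ε) :
    ∀ᶠ r in atTop, ∀ θ ∈ K, |f r θ| ≤ ε ∧ |r * pderivR f r θ| ≤ ε := by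
  obtain ⟨C0, hC0, h0⟩ := hf 0 []
  obtain ⟨C1, hC1, h1⟩ := hf 1 []
  have ht : ∀ C : ℝ, Tendsto (fun r : ℝ => C * r ^ (-ν)) atTop (𝓝 0) := by
    intro C
    simpa using (tendsto_rpow_neg_atTop hν).const_mul C
  filter_upwards [(ht C0).eventually_le_const hε, (ht C1).eventually_le_const hε,
    eventually_gt_atTop (1:ℝ)] with r e0 e1 hr θ hθ
  have h0' := h0 r hr θ hθ
  have h1' := h1 r hr θ hθ
  have hr0 : 0 < r := by linarith
  simp only [Function.iterate_zero, id, thetaDerivs, List.foldr_nil, Nat.cast_zero, sub_zero] at h0'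
  simp only [Function.iterate_one, thetaDerivs, List.foldr_nil, Nat.cast_one] at h1'
  refine ⟨h0'.trans e0, ?_⟩
  rw [abs_mul, abs_of_pos hr0]
  refine le_trans (mul_le_mul_of_nonneg_left h1' hr0.le) (le_trans (le_of_eq ?_) e1)
  rw [Real.rpow_sub hr0, Real.rpow_one]
  field_simp

lemma quad_aux {m : ℕ} (b0 : ℝ) (b1 : Fin m → ℝ) (b2 : Fin m → Fin m → ℝ) (ε : ℝ)
    (h0 : |b0| ≤ ε) (h1 : ∀ j, |b1 j| ≤ ε) (h2 : ∀ j k, |b2 j k| ≤ ε)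
    (ρ : ℝ) (w : Fin m → ℝ) :
    |b0 * ρ ^ 2 + ∑ j, b1 j * ρ * w j + ∑ j, ∑ k, b2 j k * w j * w k|
      ≤ ε * (1 + m + m ^ 2) * (ρ ^ 2 + ‖w‖ ^ 2) := by
  have hε : 0 ≤ ε := (abs_nonneg _).trans h0
  set S := ρ ^ 2 + ‖w‖ ^ 2 with hS
  have hw : ∀ j, |w j| ≤ ‖w‖ := fun j => by simpa using norm_le_pi_norm w j
  have hn := norm_nonneg w
  have c0 : |b0 * ρ ^ 2| ≤ ε * S := by
    rw [abs_mul, abs_of_nonneg (sq_nonneg ρ)]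
    exact mul_le_mul h0 (by nlinarith) (sq_nonneg _) hε
  have c1 : ∀ j, |b1 j * ρ * w j| ≤ ε * S := by
    intro j
    rw [mul_assoc, abs_mul, abs_mul]
    refine mul_le_mul (h1 j) ?_ (by positivity) hε
    have : |ρ| * |w j| ≤ |ρ| * ‖w‖ := mul_le_mul_of_nonneg_left (hw j) (abs_nonneg _)
    nlinarith [sq_nonneg (|ρ| - ‖w‖), sq_abs ρ, sq_nonneg ρ]
  have c2 : ∀ j k, |b2 j k * w j * w k| ≤ ε * S := by
    intro j k
    rw [mul_assoc, abs_mul, abs_mul]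
    refine mul_le_mul (h2 j k) ?_ (by positivity) hε
    have : |w j| * |w k| ≤ ‖w‖ * ‖w‖ := mul_le_mul (hw j) (hw k) (abs_nonneg _) hn
    nlinarith [sq_nonneg ρ]
  have d1 : |∑ j, b1 j * ρ * w j| ≤ m * (ε * S) := by
    refine (Finset.abs_sum_le_sum_abs _ _).trans ((Finset.sum_le_sum fun j _ => c1 j).trans ?_)
    simp
  have d2 : |∑ j, ∑ k, b2 j k * w j * w k| ≤ m * (m * (ε * S)) := by
    refine (Finset.abs_sum_le_sum_abs _ _).trans ((Finset.sum_le_sum (g := fun _ => m * (ε * S))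
      fun j _ => ?_).trans ?_)
    · refine (Finset.abs_sum_le_sum_abs _ _).trans ((Finset.sum_le_sum fun k _ => c2 j k).trans ?_)
      simp
    · simp
  rw [abs_le] at c0 d1 d2 ⊢
  constructor <;> nlinarith [c0.1, c0.2, d1.1, d1.2, d2.1, d2.2]

/-- energy in scaled variable -/
lemma energy_eq {m : ℕ} (hM a0 a1 a2) (r : ℝ) (θ : Fin m → ℝ) (ρ : ℝ) (ω : Fin m → ℝ) :
    energy hM a0 a1 a2 r θ ρ ω = ρ ^ 2 + ∑ j, ∑ k, hM θ j k * (ω j / r) * (ω k / r)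
      + (a0 r θ * ρ ^ 2 + ∑ j, a1 r θ j * ρ * (ω j / r)
        + ∑ j, ∑ k, a2 r θ j k * (ω j / r) * (ω k / r)) := by
  have e1 : ∀ b : Fin m → Fin m → ℝ, ∑ j, ∑ k, b j k * (ω j / r) * (ω k / r)
      = (∑ j, ∑ k, b j k * ω j * ω k) / r ^ 2 := by
    intro b
    simp only [Finset.sum_div]
    refine Finset.sum_congr rfl fun j _ => Finset.sum_congr rfl fun k _ => ?_
    ring
  have e2 : ∑ j, a1 r θ j * ρ * (ω j / r) = (∑ j, a1 r θ j * ρ * ω j) / r := by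
    simp only [Finset.sum_div]
    refine Finset.sum_congr rfl fun j _ => ?_
    ring
  rw [e1 (hM θ), e1 (a2 r θ), e2, energy]
  ring

lemma pdRho_eq {m : ℕ} (hM a0 a1 a2) (r : ℝ) (θ : Fin m → ℝ) (ρ : ℝ) (ω : Fin m → ℝ) :
    ρ * pdRho (energy hM a0 a1 a2) r θ ρ ω =
      2 * ρ ^ 2 + 2 * (a0 r θ * ρ ^ 2) + (∑ j, a1 r θ j * ρ * ω j) / r := by
  have h : HasDerivAt (fun s => energy hM a0 a1 a2 r θ s ω)
      (2 * ρ + a0 r θ * (2 * ρ) + (∑ j, a1 r θ j * ω j) / r) ρ := by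
    have hs : HasDerivAt (fun s : ℝ => ∑ j, a1 r θ j * s * ω j) (∑ j, a1 r θ j * ω j) ρ := by
      refine HasDerivAt.fun_sum fun j _ => ?_
      simpa using ((hasDerivAt_id ρ).const_mul (a1 r θ j)).mul_const (ω j)
    have h2 : HasDerivAt (fun s : ℝ => s ^ 2) (2 * ρ) ρ := by simpa using hasDerivAt_pow 2 ρ
    exact (((h2.add_const _).add (h2.const_mul _)).add (hs.div_const r)).add_const _
  rw [pdRho, h.deriv]
  have : ∑ j, a1 r θ j * ρ * ω j = ρ * ∑ j, a1 r θ j * ω j := by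
    rw [Finset.mul_sum]
    exact Finset.sum_congr rfl fun j _ => by ring
  rw [this]; ring

lemma pdR_eq {m : ℕ} (hM a0 a1 a2) (r : ℝ) (hr : 0 < r) (θ : Fin m → ℝ) (ρ : ℝ) (ω : Fin m → ℝ)
    (d0 : DifferentiableAt ℝ (fun s => a0 s θ) r)
    (d1 : ∀ j, DifferentiableAt ℝ (fun s => a1 s θ j) r)
    (d2 : ∀ j k, DifferentiableAt ℝ (fun s => a2 s θ j k) r) :
    r * pdR (energy hM a0 a1 a2) r θ ρ ω =
      - 2 * ((∑ j, ∑ k, hM θ j k * ω j * ω k) / r ^ 2)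
      - (∑ j, a1 r θ j * ρ * ω j) / r - 2 * ((∑ j, ∑ k, a2 r θ j k * ω j * ω k) / r ^ 2)
      + ((r * pderivR a0 r θ) * ρ ^ 2
        + ∑ j, (r * pderivR (fun s θ => a1 s θ j) r θ) * ρ * (ω j / r)
        + ∑ j, ∑ k, (r * pderivR (fun s θ => a2 s θ j k) r θ) * (ω j / r) * (ω k / r)) := by
  have hr' := hr.ne'
  have h2 : HasDerivAt (fun s : ℝ => s ^ 2) (2 * r) r := by simpa using hasDerivAt_pow 2 r
  have s1 : HasDerivAt (fun s => ∑ j, a1 s θ j * ρ * ω j)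
      (∑ j, pderivR (fun s θ => a1 s θ j) r θ * ρ * ω j) r :=
    HasDerivAt.fun_sum fun j _ => ((d1 j).hasDerivAt.mul_const ρ).mul_const (ω j)
  have s2 : HasDerivAt (fun s => ∑ j, ∑ k, a2 s θ j k * ω j * ω k)
      (∑ j, ∑ k, pderivR (fun s θ => a2 s θ j k) r θ * ω j * ω k) r :=
    HasDerivAt.fun_sum fun j _ => HasDerivAt.fun_sum fun k _ =>
      ((d2 j k).hasDerivAt.mul_const (ω j)).mul_const (ω k)
  have h := ((((hasDerivAt_const r (ρ ^ 2)).add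
    ((hasDerivAt_const r (∑ j, ∑ k, hM θ j k * ω j * ω k)).div h2 (by positivity))).add
      (d0.hasDerivAt.mul_const (ρ ^ 2))).add (s1.div (hasDerivAt_id r) hr')).add
      (s2.div h2 (by positivity))
  have e1 : ∑ j, (r * pderivR (fun s θ => a1 s θ j) r θ) * ρ * (ω j / r)
      = ∑ j, pderivR (fun s θ => a1 s θ j) r θ * ρ * ω j :=
    Finset.sum_congr rfl fun j _ => by field_simp
  have e2 : ∑ j, ∑ k, (r * pderivR (fun s θ => a2 s θ j k) r θ) * (ω j / r) * (ω k / r)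
      = (∑ j, ∑ k, pderivR (fun s θ => a2 s θ j k) r θ * ω j * ω k) / r := by
    simp only [Finset.sum_div]
    exact Finset.sum_congr rfl fun j _ => Finset.sum_congr rfl fun k _ => by field_simp
  rw [e1, e2]
  have h' : pdR (energy hM a0 a1 a2) r θ ρ ω = _ := h.deriv
  rw [h']
  simp only [pderivR, id]
  field_simp
  ring

/-- Lemma 2.1, escape estimate. A backward nontrapped trajectory of
positive energy escapes linearly: `r(t) > C⁻¹|t| - C` for `t < -C`. -/
theorem statement_4 {m : ℕ} (hm : 1 ≤ m) {μ : ℝ} (hμ : μ ∈ Ioo (0:ℝ) 1)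
    {U : Set (Fin m → ℝ)} (hU : IsOpen U) (c : Coeffs m μ U)
    (K : Set (Fin m → ℝ)) (hK : IsCompact K) (hKU : K ⊆ U) (T₀ : ℝ)
    (r : ℝ → ℝ) (θ : ℝ → Fin m → ℝ) (ρ : ℝ → ℝ) (ω : ℝ → Fin m → ℝ)
    (p₀ : ℝ) (hp₀ : 0 < p₀)
    (hdom : ∀ t ≤ T₀, r t ∈ Ioi (1:ℝ) ∧ θ t ∈ K)
    (hsol : IsHamSolOn c.p r θ ρ ω (Iic T₀))
    (hen : ∀ t ≤ T₀, c.p (r t) (θ t) (ρ t) (ω t) = p₀)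
    (hesc : Tendsto r atBot atTop) :
    ∃ C > (0:ℝ), ∀ t < -C, r t > C⁻¹ * |t| - C := by
  obtain ⟨l, hl, hl1, hco⟩ := coercive_aux c.hM K hK
    (fun j k => ((c.hM_smooth j k).continuousOn).mono hKU) (fun θ hθ => c.hM_posdef θ (hKU hθ))
  have hN : (0:ℝ) < 1 + m + m ^ 2 := by positivity
  obtain ⟨ε, hε⟩ : ∃ ε : ℝ, ε = l / 2 / (1 + m + m ^ 2) := ⟨_, rfl⟩
  have hεp : 0 < ε := by rw [hε]; positivity
  have hεN : ε * (1 + m + m ^ 2) = l / 2 := by rw [hε]; field_simp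
  have E0 := decay_aux c.a0 (1 + μ) (by linarith [hμ.1]) K (c.a0_decay K hK hKU) ε hεp
  have E1 := eventually_all.2 fun j => decay_aux _ μ hμ.1 K (c.a1_decay K hK hKU j) ε hεp
  have E2 := eventually_all.2 fun j => eventually_all.2 fun k =>
    decay_aux _ μ hμ.1 K (c.a2_decay K hK hKU j k) ε hεp
  obtain ⟨T₁, hT₁⟩ := eventually_atBot.1 (hesc.eventually (E0.and (E1.and E2)))
  obtain ⟨T, hT⟩ : ∃ T, T = min T₀ T₁ := ⟨_, rfl⟩
  have key : ∀ t ≤ T, |ρ t| ≤ 1 + 2 * p₀ / l ∧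
      ∃ d, p₀ ≤ d ∧ HasDerivAt (fun s => r s * ρ s) d t := by
    intro t ht
    have ht0 : t ≤ T₀ := ht.trans (hT ▸ min_le_left _ _)
    obtain ⟨b0, b1, b2⟩ := hT₁ t (ht.trans (hT ▸ min_le_right _ _))
    obtain ⟨hr1, hθ⟩ := hdom t ht0
    have hr1 : 1 < r t := hr1
    have hr0 : 0 < r t := by linarith
    have q1 := quad_aux (c.a0 (r t) (θ t)) (c.a1 (r t) (θ t)) (c.a2 (r t) (θ t)) ε
      (b0 _ hθ).1 (fun j => (b1 j _ hθ).1) (fun j k => (b2 j k _ hθ).1) (ρ t) (fun j => ω t j / r t)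
    have q2 := quad_aux (r t * pderivR c.a0 (r t) (θ t))
      (fun j => r t * pderivR (fun s θ => c.a1 s θ j) (r t) (θ t))
      (fun j k => r t * pderivR (fun s θ => c.a2 s θ j k) (r t) (θ t)) ε
      (b0 _ hθ).2 (fun j => (b1 j _ hθ).2) (fun j k => (b2 j k _ hθ).2) (ρ t) (fun j => ω t j / r t)
    have hq := hco _ hθ (fun j => ω t j / r t)
    have en := hen t ht0
    have en2 := en
    rw [Coeffs.p, energy_eq] at en
    rw [Coeffs.p, energy] at en2
    rw [hεN] at q1 q2
    have hnn := sq_nonneg ‖fun j => ω t j / r t‖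
    have hS : l / 2 * (ρ t ^ 2 + ‖fun j => ω t j / r t‖ ^ 2) ≤ p₀ := by
      have := (abs_le.1 q1).1
      nlinarith [sq_nonneg (ρ t)]
    refine ⟨?_, ?_⟩
    · have : ρ t ^ 2 ≤ 2 * p₀ / l := by
        rw [le_div_iff₀ hl]; nlinarith
      nlinarith [sq_abs (ρ t), sq_nonneg (|ρ t| - 1)]
    · obtain ⟨dr, -, dρ, -⟩ := hsol t ht0
      refine ⟨_, ?_, dr.mul dρ⟩
      have hpt : ((r t, θ t) : ℝ × (Fin m → ℝ)) ∈ Ioi (1:ℝ) ×ˢ U := ⟨hr1, hKU hθ⟩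
      have hdiff : ∀ g : ℝ × (Fin m → ℝ) → ℝ, ContDiffOn ℝ (⊤ : ℕ∞) g (Ioi (1:ℝ) ×ˢ U) →
          DifferentiableAt ℝ (fun s => g (s, θ t)) (r t) := by
        intro g hg
        have h1 : DifferentiableAt ℝ g (r t, θ t) :=
          (hg.contDiffAt ((isOpen_Ioi.prod hU).mem_nhds hpt)).differentiableAt (by simp)
        exact h1.comp (r t) (f := fun s : ℝ => (s, θ t)) (by fun_prop)
      have f1 := pdRho_eq c.hM c.a0 c.a1 c.a2 (r t) (θ t) (ρ t) (ω t)
      have f2 := pdR_eq c.hM c.a0 c.a1 c.a2 (r t) hr0 (θ t) (ρ t) (ω t)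
        (hdiff _ c.a0_smooth) (fun j => hdiff _ (c.a1_smooth j)) (fun j k => hdiff _ (c.a2_smooth j k))
      have := (abs_le.1 q2).2
      simp only [Coeffs.p]
      linarith
  have mv : ∀ t ≤ T, p₀ * (T - t) ≤ r T * ρ T - r t * ρ t := by
    intro t ht
    refine (convex_Iic T).mul_sub_le_image_sub_of_le_deriv (f := fun s => r s * ρ s) ?_ ?_ ?_
      t ht T (mem_Iic.2 le_rfl) ht
    · intro s hs
      obtain ⟨-, d, -, hd⟩ := key s hs
      exact hd.continuousAt.continuousWithinAt
    · intro s hs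
      obtain ⟨-, d, -, hd⟩ := key s (mem_Iic.1 (interior_subset hs))
      exact hd.differentiableAt.differentiableWithinAt
    · intro s hs
      obtain ⟨-, d, h, hd⟩ := key s (mem_Iic.1 (interior_subset hs))
      rw [hd.deriv]; exact h
  obtain ⟨B, hB⟩ : ∃ B, B = 1 + 2 * p₀ / l := ⟨_, rfl⟩
  have hBp : 0 < B := by rw [hB]; positivity
  obtain ⟨A, hA⟩ : ∃ A, A = r T * ρ T - p₀ * T := ⟨_, rfl⟩
  have hCp : 0 < |T| + B / p₀ + |A| / B + 1 := by positivity
  refine ⟨|T| + B / p₀ + |A| / B + 1, hCp, fun t ht => ?_⟩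
  have n1 : 0 ≤ B / p₀ := by positivity
  have n2 : 0 ≤ |A| / B := by positivity
  have n3 := abs_nonneg T
  have htT : t ≤ T := by linarith [neg_abs_le T]
  have hr0 : 0 < r t := by
    have : 1 < r t := (hdom t (htT.trans (hT ▸ min_le_left _ _))).1
    linarith
  have hm1 := mv t htT
  have hρ := (key t htT).1
  rw [← hB] at hρ
  have hρ2 := (abs_le.1 hρ).1
  have ht0 : t < 0 := by linarith
  rw [abs_of_neg ht0]
  have hrB : p₀ * (-t) - |A| ≤ r t * B := by
    have := mul_le_mul_of_nonneg_left hρ2 hr0.le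
    linarith [le_abs_self A]
  have hinv : (|T| + B / p₀ + |A| / B + 1)⁻¹ ≤ p₀ / B := by
    rw [← inv_div B p₀]
    have hBq : 0 < B / p₀ := by positivity
    exact inv_anti₀ hBq (by linarith [n2, n3])
  have h3 : (|T| + B / p₀ + |A| / B + 1)⁻¹ * (-t) ≤ p₀ / B * (-t) :=
    mul_le_mul_of_nonneg_right hinv (by linarith)
  have h4 : p₀ / B * (-t) - |A| / B ≤ r t := by
    have : p₀ / B * (-t) - |A| / B = (p₀ * (-t) - |A|) / B := by ring
    rw [this, div_le_iff₀ hBp]; exact hrB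
  linarith


end Scattering
end
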